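/- arXiv:0806.3377 — 3 statements merged into one kernel-verified Lean document; each statement's English description precedes it below -/
import Mathlib

section
/- If B = Σ_{j,k=1}^d D_j(b_jk(x) D_k) is a differential operator of div-grad type and A = (x·∇ + ∇·x)/(2i) is the generator of dilations, then the commutator i[B, A] is again of div-grad type; more precisely i[B, A] = Σ_{j,k=1}^d D_j( 2 b_jk(x) - (x·∇ b_jk)(x) ) D_k. -/
open MeasureTheory Filter Topology Complex
open scoped Real ENNReal FourierTransform ComplexConjugate

noncomputable section

/-- Euclidean space `ℝ^d`. -/
abbrev Ed (d : ℕ) : Type := EuclideanSpace ℝ (Fin d)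

/-- `L²(ℝ^d)` with complex values. -/
abbrev L2 (d : ℕ) := MeasureTheory.Lp ℂ 2 (volume : Measure (Ed d))

/-- The partial derivative `∂_j u`. -/
def pd (d : ℕ) (j : Fin d) (u : Ed d → ℂ) : Ed d → ℂ :=
  fun x => fderiv ℝ u x (EuclideanSpace.single j (1:ℝ))

/-- The operator `∑_{j,k} D_j (b_{jk} D_k) = - ∑_{j,k} ∂_j (b_{jk} ∂_k)` (complex
coefficients), applied to a function `u`. -/
def divGradC (d : ℕ) (b : Ed d → Fin d → Fin d → ℂ) (u : Ed d → ℂ) : Ed d → ℂ :=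
  fun x => -∑ j : Fin d, ∑ k : Fin d,
    fderiv ℝ (fun y => b y j k * fderiv ℝ u y (EuclideanSpace.single k (1:ℝ))) x
      (EuclideanSpace.single j (1:ℝ))

/-- `- div (G ∇ u) = ∑_{j,k} D_j (G_{jk} D_k) u` for a real coefficient matrix `G`. -/
def divGrad (d : ℕ) (G : Ed d → Fin d → Fin d → ℝ) (u : Ed d → ℂ) : Ed d → ℂ :=
  divGradC d (fun x j k => (G x j k : ℂ)) u

/-- The operation `a ↦ x·∇a` on real valued functions. -/
def xdotOp (d : ℕ) : (Ed d → ℝ) → Ed d → ℝ := fun a x => fderiv ℝ a x x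

/-- The operation `a ↦ x·∇a` on complex valued functions. -/
def xdotC (d : ℕ) : (Ed d → ℂ) → Ed d → ℂ := fun a x => fderiv ℝ a x x

/-- `a ∈ C_b^∞(ℝ^d)`: smooth with all derivatives bounded. -/
def CbSmooth (d : ℕ) (a : Ed d → ℝ) : Prop :=
  ContDiff ℝ (⊤ : ℕ∞) a ∧ ∀ n : ℕ, ∃ C : ℝ, ∀ x, ‖iteratedFDeriv ℝ n a x‖ ≤ C

/-- `a ∈ S_dil(ℝ^d)` : `a ∈ C_b^∞` and `(x·∇)^n a ∈ L^∞` for all `n`. -/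
def MemSdil (d : ℕ) (a : Ed d → ℝ) : Prop :=
  CbSmooth d a ∧ ∀ n : ℕ, ∃ C : ℝ, ∀ x, |(xdotOp d)^[n] a x| ≤ C

/-- Complex-valued version of `S_dil(ℝ^d)`. -/
def MemSdilC (d : ℕ) (a : Ed d → ℂ) : Prop :=
  (ContDiff ℝ (⊤ : ℕ∞) a ∧ ∀ n : ℕ, ∃ C : ℝ, ∀ x, ‖iteratedFDeriv ℝ n a x‖ ≤ C) ∧
  ∀ n : ℕ, ∃ C : ℝ, ∀ x, ‖(xdotC d)^[n] a x‖ ≤ C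

/-- The coefficient matrix is symmetric with real entries. -/
def SymmetricCoef (d : ℕ) (G : Ed d → Fin d → Fin d → ℝ) : Prop := ∀ x j k, G x j k = G x k j

/-- Uniform ellipticity: `Λ₊ ≥ G(x) ≥ Λ₋ > 0` as quadratic forms. -/
def UniformlyElliptic (d : ℕ) (G : Ed d → Fin d → Fin d → ℝ) : Prop :=
  ∃ lam Lam : ℝ, 0 < lam ∧ ∀ (x : Ed d) (v : Fin d → ℝ),
    lam * ∑ j, v j ^ 2 ≤ (∑ j, ∑ k, G x j k * v j * v k) ∧
      (∑ j, ∑ k, G x j k * v j * v k) ≤ Lam * ∑ j, v j ^ 2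

/-- The standing assumptions of the paper: `G` symmetric with entries in `C_b^∞`,
uniformly elliptic. -/
def Standing (d : ℕ) (G : Ed d → Fin d → Fin d → ℝ) : Prop :=
  (∀ j k, CbSmooth d fun x => G x j k) ∧ SymmetricCoef d G ∧ UniformlyElliptic d G

/-- `G = I_d + H`. -/
def Gmat (d : ℕ) (H : Ed d → Fin d → Fin d → ℝ) : Ed d → Fin d → Fin d → ℝ :=
  fun x j k => (if j = k then 1 else 0) + H x j k

/-- Long range condition `|∂^α (G - I_d)| ≤ C_α ⟨x⟩^{-μ-|α|}`. -/
def LongRange (d : ℕ) (G : Ed d → Fin d → Fin d → ℝ) (μ : ℝ) : Prop :=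
  ∀ (j k : Fin d) (n : ℕ), ∃ C : ℝ, ∀ x : Ed d,
    ‖iteratedFDeriv ℝ n (fun y => G y j k - if j = k then (1:ℝ) else 0) x‖
      ≤ C * ((1 + ‖x‖ ^ 2) ^ (-(μ + n) / 2) : ℝ)

/-- `R` is the resolvent `(P - z)⁻¹` of the self-adjoint realization of
`P = - div (G ∇·)`: for every `f ∈ L²`, `g = R f` solves `(P - z) g = f` in the sense
of distributions (this characterizes the resolvent uniquely). -/
def IsWeakResolvent (d : ℕ) (G : Ed d → Fin d → Fin d → ℝ) (z : ℂ)
    (R : L2 d →L[ℂ] L2 d) : Prop :=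
  ∀ (f : L2 d) (φ : SchwartzMap (Ed d) ℂ),
    (∫ x, (R f) x * divGrad d G (⇑φ) x) - z * (∫ x, (R f) x * φ x) = ∫ x, f x * φ x

/-- The japanese bracket weight `⟨x⟩^s = (1+|x|²)^{s/2}`. -/
def jweight (d : ℕ) (s : ℝ) : Ed d → ℝ := fun x => (1 + ‖x‖ ^ 2) ^ (s / 2)

/-- The dilation group `(e^{itA} u)(x) = e^{td/2} u(e^t x)`, where
`A = (x·∇ + ∇·x)/(2i)` is the generator of dilations. -/
def dil (d : ℕ) (t : ℝ) (u : Ed d → ℂ) : Ed d → ℂ :=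
  fun x => (Real.exp (t * d / 2) : ℂ) * u (Real.exp t • x)

/-- The `L²` inner product of two functions (conjugate linear in the first variable,
as is Mathlib's convention). -/
def pairL2 (d : ℕ) (u v : Ed d → ℂ) : ℂ := ∫ x : Ed d, (starRingEnd ℂ) (u x) * v x

/-- The resolvent `(hA - z)⁻¹ = (1/i) ∫₀^{±∞} e^{-itz} e^{ithA} dt` (`± Im z < 0`) of the
(rescaled) generator of dilations, realized by its defining integral formula. -/
def resDil (d : ℕ) (h : ℝ) (z : ℂ) (u : Ed d → ℂ) : Ed d → ℂ := fun x =>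
  if z.im < 0 then
    Complex.I⁻¹ * ∫ t in Set.Ici (0:ℝ), Complex.exp (-(Complex.I * t * z)) * dil d (t * h) u x
  else
    -Complex.I⁻¹ * ∫ t in Set.Iic (0:ℝ), Complex.exp (-(Complex.I * t * z)) * dil d (t * h) u x

/-- `sin(τ A) u = (e^{iτA} - e^{-iτA}) u / (2i)`. -/
def sinA (d : ℕ) (τ : ℝ) (u : Ed d → ℂ) : Ed d → ℂ :=
  fun x => (dil d τ u x - dil d (-τ) u x) / (2 * Complex.I)

/-- `F(hA) = arctan(hA)` realized through `arctan λ = ∫₀^∞ sin(tλ) e^{-t} dt / t`. -/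
def arctanA (d : ℕ) (h : ℝ) (u : Ed d → ℂ) : Ed d → ℂ :=
  fun x => ∫ t in Set.Ioi (0:ℝ), ((Real.exp (-t) / t : ℝ) : ℂ) * sinA d (t * h) u x

/-- Coefficients of the commutator `i[P,A] = ∑ D_j (2G_{jk} - x·∇G_{jk}) D_k`. -/
def commCoef (d : ℕ) (G : Ed d → Fin d → Fin d → ℝ) : Ed d → Fin d → Fin d → ℝ :=
  fun x j k => 2 * G x j k - xdotOp d (fun y => G y j k) x

/-- `P_τ = e^{-iτA} (i[P,A]) e^{iτA}` applied to a function. -/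
def ptauFun (d : ℕ) (G : Ed d → Fin d → Fin d → ℝ) (τ : ℝ) (u : Ed d → ℂ) : Ed d → ℂ :=
  dil d (-τ) (divGrad d (commCoef d G) (dil d τ u))

/-- Coefficients of `P_τ = e^{-iτA} (i[P,A]) e^{iτA}` for `P = -div((I+H)∇)`;
indeed `e^{-iτA} (∑ D_j b D_k) e^{iτA} = e^{2τ} ∑ D_j b(e^{-τ}x) D_k`. -/
def ptauCoef (d : ℕ) (H : Ed d → Fin d → Fin d → ℝ) (τ : ℝ) : Ed d → Fin d → Fin d → ℝ :=
  fun x j k => Real.exp (2 * τ) * commCoef d (Gmat d H) (Real.exp (-τ) • x) j k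

/-- Coefficients of `Q_s = ∫₀¹ (d P_τ / dτ)|_{τ=σs} dσ`. -/
def qCoef (d : ℕ) (H : Ed d → Fin d → Fin d → ℝ) (s : ℝ) : Ed d → Fin d → Fin d → ℝ :=
  fun x j k => ∫ σ in (0:ℝ)..(1:ℝ), deriv (fun τ => ptauCoef d H τ x j k) (σ * s)

/-- Coefficients of `B_τ = τ ∫₀¹ s Q_{sτ} ds`. -/
def bCoef (d : ℕ) (H : Ed d → Fin d → Fin d → ℝ) (τ : ℝ) : Ed d → Fin d → Fin d → ℝ :=
  fun x j k => τ * ∫ s in (0:ℝ)..(1:ℝ), s * qCoef d H (s * τ) x j k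

/-- The Fourier multiplier `|D|` (with symbol `|ξ|`). -/
def absD (d : ℕ) (u : Ed d → ℂ) : Ed d → ℂ :=
  fun x => 𝓕⁻ (fun ξ : Ed d => (‖ξ‖ : ℂ) * 𝓕 u ξ) x

/-- `‖ |D| w ‖_{L²}`, computed on the Fourier side (Plancherel). -/
def Dnorm (d : ℕ) (w : Ed d → ℂ) : ℝ :=
  (eLpNorm (fun ξ : Ed d => (‖ξ‖ : ℂ) * 𝓕 w ξ) 2 volume).toReal

/-- A general Fourier multiplier `ρ(D)`. -/
def multD (d : ℕ) (ρ : Ed d → ℂ) (u : Ed d → ℂ) : Ed d → ℂ :=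
  fun x => 𝓕⁻ (fun ξ : Ed d => ρ ξ * 𝓕 u ξ) x

/-- The operator `A = (x·∇ + ∇·x)/(2i) = (x·∇ + d/2)/i` applied to a function. -/
def opA (d : ℕ) (u : Ed d → ℂ) : Ed d → ℂ :=
  fun x => (fderiv ℝ u x x + (d / 2 : ℂ) * u x) / Complex.I

/-- The functions `F_ν(λ) = ∫₀^∞ sin(tλ) t/(t²+ν²) e^{-t} dt` approximating `arctan`. -/
def Fnu (ν lam : ℝ) : ℝ :=
  ∫ t in Set.Ioi (0:ℝ), Real.sin (t * lam) * (t / (t ^ 2 + ν ^ 2)) * Real.exp (-t)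

/-- `m`-admissible family in `S_dil(ℝ^d)`:
`‖∂_τ^k (x·∇)^n b_τ‖_{L^∞} ≤ C_{kn} e^{m|τ|}` for all `k, n`. -/
def AdmissibleCoeff (d : ℕ) (m : ℕ) (b : ℝ → Ed d → ℂ) : Prop :=
  (∀ τ, MemSdilC d (b τ)) ∧
  (∀ (n : ℕ) (x : Ed d), ContDiff ℝ (⊤ : ℕ∞) fun τ => (xdotC d)^[n] (b τ) x) ∧
  ∀ k n : ℕ, ∃ C : ℝ, ∀ (τ : ℝ) (x : Ed d),
    ‖iteratedDeriv k (fun σ => (xdotC d)^[n] (b σ) x) τ‖ ≤ C * Real.exp (m * |τ|)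

/-- `m`-admissible family of differential operators `B_τ = ∑ D_j b_{jk,τ} D_k`. -/
def AdmissibleOp (d : ℕ) (m : ℕ) (B : ℝ → Ed d → Fin d → Fin d → ℂ) : Prop :=
  ∀ j k, AdmissibleCoeff d m fun τ x => B τ x j k

/-- Functions that are continuous and bounded on `[0,∞)` (the spectrum of `P`). -/
def GoodSymbol (φ : ℝ → ℂ) : Prop :=
  Continuous φ ∧ ∃ C : ℝ, ∀ lam : ℝ, 0 ≤ lam → ‖φ lam‖ ≤ C

/-- The (continuous bounded) functional calculus `φ ↦ φ(P)` of the nonnegative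
self-adjoint operator `P = -div(G∇)`, characterized by: it is linear and
multiplicative on continuous functions bounded on `[0,∞) ⊇ spec(P)`, compatible with
sup-norm bounds and adjoints, only depends on the restriction of the symbol to
`[0,∞)`, and sends `λ ↦ (λ - z)⁻¹` to the resolvent `(P - z)⁻¹`.  These properties
determine `φ(P)` uniquely for every `φ` continuous and vanishing at infinity.
Moreover `0` is not an eigenvalue of `P` (field `ker_triv`). -/
structure SpectralCalc (d : ℕ) (G : Ed d → Fin d → Fin d → ℝ) where
  map : (ℝ → ℂ) → (L2 d →L[ℂ] L2 d)
  map_congr : ∀ φ ψ, GoodSymbol φ → GoodSymbol ψ →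
    (∀ lam : ℝ, 0 ≤ lam → φ lam = ψ lam) → map φ = map ψ
  map_add : ∀ φ ψ, GoodSymbol φ → GoodSymbol ψ →
    map (fun lam => φ lam + ψ lam) = map φ + map ψ
  map_smul : ∀ (c : ℂ) φ, GoodSymbol φ → map (fun lam => c * φ lam) = c • map φ
  map_mul : ∀ φ ψ, GoodSymbol φ → GoodSymbol ψ →
    map (fun lam => φ lam * ψ lam) = (map φ).comp (map ψ)
  map_norm : ∀ (φ) (C : ℝ), (∀ lam : ℝ, 0 ≤ lam → ‖φ lam‖ ≤ C) → ‖map φ‖ ≤ C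
  map_star : ∀ φ, GoodSymbol φ →
    ContinuousLinearMap.adjoint (map φ) = map (fun lam => (starRingEnd ℂ) (φ lam))
  map_resolvent : ∀ z : ℂ, z.im ≠ 0 →
    IsWeakResolvent d G z (map fun lam => ((lam : ℂ) - z)⁻¹)
  ker_triv : ∀ f : L2 d,
    (∀ φ : SchwartzMap (Ed d) ℂ, (∫ x, f x * divGrad d G (⇑φ) x) = 0) → f = 0

/-- `Rj = ∂_j P^{-1/2}` is the `j`-th Riesz transform of `P`, defined as the strong
limit `s-lim_n π^{-1/2} ∂_j ∫_{1/n}^n e^{-tP} dt/√t`; here `gn n` is the vector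
integral `∫_{1/n}^n e^{-tP} f dt/√t` and `wn n` is its distributional `∂_j`
derivative. -/
def RieszOf (d : ℕ) (G : Ed d → Fin d → Fin d → ℝ) (S : SpectralCalc d G) (j : Fin d)
    (Rj : L2 d →L[ℂ] L2 d) : Prop :=
  ∀ (f : L2 d) (gn wn : ℕ → L2 d),
    (∀ n : ℕ, gn n = ∫ t in Set.Icc ((n : ℝ)⁻¹) (n : ℝ),
        ((Real.sqrt t)⁻¹ : ℝ) • (S.map (fun lam => Complex.exp (-(t : ℂ) * ((max lam 0 : ℝ) : ℂ))) f)) →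
    (∀ (n : ℕ) (φ : SchwartzMap (Ed d) ℂ),
        (∫ x, (wn n) x * φ x) = -∫ x, (gn n) x * pd d j (⇑φ) x) →
    Tendsto (fun n : ℕ => ((Real.sqrt Real.pi)⁻¹ : ℝ) • wn n) atTop (𝓝 (Rj f))

/-!
Leibniz' rule and `∂_v (x · ∇u) = x · ∇ ∂_v u + ∂_v u` give the formula for the commutator. The
remaining point is that `x · ∇` maps `S_dil` into itself, i.e. that all derivatives of `x · ∇f` are
bounded as soon as those of `f` and the function `(x · ∇)² f` are, even though the weight `x` is
unbounded. By Taylor's formula along the dilation flow, the difference quotients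
`t⁻¹ (f(x) - f(e⁻ᵗ x))` differ from `x · ∇f` by `O(t)` uniformly, while each of their derivatives is
`O(1 / t)`. Landau–Kolmogorov interpolation between order `0` and a high order turns this into decay
of the derivatives of order `≤ n` of the successive differences along a geometric sequence of `t`,
so that their telescoping series converges in `C_b^n`.
-/

section

variable {V F : Type*} [NormedAddCommGroup V] [NormedSpace ℝ V]
  [NormedAddCommGroup F] [NormedSpace ℝ F]

theorem norm_iteratedFDeriv_iteratedFDeriv (m k : ℕ) (f : V → F) (x : V) :
    ‖iteratedFDeriv ℝ m (iteratedFDeriv ℝ k f) x‖ = ‖iteratedFDeriv ℝ (m + k) f x‖ := by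
  induction m generalizing k with
  | zero => rw [norm_iteratedFDeriv_zero, zero_add]
  | succ m ih =>
    rw [← norm_iteratedFDeriv_fderiv, fderiv_iteratedFDeriv,
      LinearIsometryEquiv.norm_iteratedFDeriv_comp_left, ih, add_right_comm, add_assoc]

theorem norm_add_sub_sub_fderiv_le {f : V → F} (hf : ContDiff ℝ 2 f) {B : ℝ}
    (hB : ∀ x, ‖iteratedFDeriv ℝ 2 f x‖ ≤ B) (x w : V) :
    ‖f (x + w) - f x - fderiv ℝ f x w‖ ≤ B * ‖w‖ ^ 2 := by
  have hf' : Differentiable ℝ (fderiv ℝ f) :=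
    (hf.fderiv_right (m := 1) (by norm_num)).differentiable one_ne_zero
  have fderiv_sub_le : ∀ y ∈ Metric.closedBall x ‖w‖, ‖fderiv ℝ f y - fderiv ℝ f x‖ ≤ B * ‖w‖ := by
    intro y hy
    have hB' : ∀ z, ‖fderiv ℝ (fderiv ℝ f) z‖ ≤ B := fun z => by
      rw [← norm_iteratedFDeriv_one, norm_iteratedFDeriv_fderiv]
      exact hB z
    have hB0 : 0 ≤ B := (norm_nonneg _).trans (hB x)
    calc ‖fderiv ℝ f y - fderiv ℝ f x‖ ≤ B * ‖y - x‖ :=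
          convex_univ.norm_image_sub_le_of_norm_fderiv_le (fun z _ => hf' z) (fun z _ => hB' z)
            trivial trivial
      _ ≤ B * ‖w‖ := by
          gcongr
          exact mem_closedBall_iff_norm.1 hy
  have h := (convex_closedBall x ‖w‖).norm_image_sub_le_of_norm_fderiv_le'
    (fun z _ => hf.differentiable two_ne_zero z) fderiv_sub_le
    (Metric.mem_closedBall_self (norm_nonneg w)) (y := x + w) (by simp)
  simpa only [add_sub_cancel_left, sq, mul_assoc] using h

/-- The space `C_b^∞(V; F)` of smooth functions with all derivatives bounded: `CbSmooth` for
functions between arbitrary normed spaces. -/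
def HasBoundedDerivs (f : V → F) : Prop :=
  ContDiff ℝ (⊤ : ℕ∞) f ∧ ∀ n : ℕ, ∃ C : ℝ, ∀ x, ‖iteratedFDeriv ℝ n f x‖ ≤ C

theorem HasBoundedDerivs.contDiff_nat {f : V → F} (hf : HasBoundedDerivs f) (n : ℕ) :
    ContDiff ℝ n f :=
  contDiff_infty.1 hf.1 n

theorem HasBoundedDerivs.sub {f g : V → F} (hf : HasBoundedDerivs f) (hg : HasBoundedDerivs g) :
    HasBoundedDerivs (f - g) := by
  refine ⟨hf.1.sub hg.1, fun n => ?_⟩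
  obtain ⟨A, hA⟩ := hf.2 n
  obtain ⟨B, hB⟩ := hg.2 n
  refine ⟨A + B, fun x => ?_⟩
  rw [iteratedFDeriv_sub_apply (hf.contDiff_nat n).contDiffAt
    (hg.contDiff_nat n).contDiffAt]
  exact norm_sub_le_of_le (hA x) (hB x)

theorem HasBoundedDerivs.const_smul {f : V → F} (hf : HasBoundedDerivs f) (c : ℝ) :
    HasBoundedDerivs (c • f) := by
  refine ⟨hf.1.const_smul c, fun n => ?_⟩
  obtain ⟨A, hA⟩ := hf.2 n
  refine ⟨‖c‖ * A, fun x => ?_⟩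
  rw [iteratedFDeriv_const_smul_apply (hf.contDiff_nat n).contDiffAt, norm_smul]
  gcongr
  exact hA x

theorem exists_forall_le_mul_add_of_mul_succ_le (m : ℕ) : ∃ C : ℝ, 1 ≤ C ∧
    ∀ a : ℕ → ℝ, (∀ k, 0 ≤ a k) → (∀ k, ∀ τ > 0, τ * a (k + 1) ≤ 2 * a k + τ ^ 2 * a (k + 2)) →
    ∀ k ≤ m, a k ≤ C * (a 0 + a m) := by
  induction m with
  | zero =>
    refine ⟨1, le_rfl, fun a ha _ k hk => ?_⟩
    rw [Nat.le_zero.1 hk]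
    linarith [ha 0]
  | succ m ih =>
    obtain ⟨C, hC, ih⟩ := ih
    have hC2 : 0 < C * C := by positivity
    refine ⟨C * (2 + 8 * C), by nlinarith, fun a ha h k hk => ?_⟩
    have a_le : a m ≤ a 0 + 8 * C * a (m + 1) := by
      rcases m with _ | l
      · nlinarith [ha 1]
      · -- With `τ = 4C`, the multiple `2C a (l + 1)` of the left side absorbs the contribution of
        -- `h_low`.
        have h_top := h l (4 * C) (by positivity)
        have h_low : a l ≤ C * (a 0 + a (l + 1)) := ih a ha h l l.le_succ
        refine le_of_mul_le_mul_left ?_ (show 0 < 2 * C by positivity)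
        linarith
    rcases hk.lt_or_eq with hk | rfl
    · have h_k : a k ≤ C * (a 0 + a m) := ih a ha h k (Nat.lt_succ_iff.1 hk)
      calc a k ≤ C * (a 0 + a m) := h_k
        _ ≤ C * (a 0 + (a 0 + 8 * C * a (m + 1))) := by gcongr
        _ ≤ C * (2 + 8 * C) * (a 0 + a (m + 1)) := by nlinarith [ha 0, ha (m + 1)]
    · have : 0 ≤ a 0 := ha 0
      have : 0 ≤ a (m + 1) := ha _
      nlinarith

theorem mul_norm_fderiv_le {f : V → F} (hf : ContDiff ℝ 2 f) {A B s : ℝ}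
    (hA : ∀ x, ‖f x‖ ≤ A) (hB : ∀ x, ‖iteratedFDeriv ℝ 2 f x‖ ≤ B) (hs : 0 < s) (x : V) :
    s * ‖fderiv ℝ f x‖ ≤ 2 * A + s ^ 2 * B := by
  have hA0 : 0 ≤ A := (norm_nonneg _).trans (hA x)
  have hB0 : 0 ≤ B := (norm_nonneg _).trans (hB x)
  rw [← le_div_iff₀' hs]
  refine ContinuousLinearMap.opNorm_le_of_unit_norm (by positivity) fun v hv => ?_
  rw [le_div_iff₀' hs]
  have taylor := norm_add_sub_sub_fderiv_le hf hB x (s • v)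
  rw [map_smul, norm_smul, hv, Real.norm_of_nonneg hs.le, mul_one] at taylor
  calc s * ‖fderiv ℝ f x v‖ = ‖s • fderiv ℝ f x v‖ := by
        rw [norm_smul, Real.norm_of_nonneg hs.le]
    _ ≤ ‖f (x + s • v)‖ + ‖f x‖ + ‖f (x + s • v) - f x - s • fderiv ℝ f x v‖ := by
        have h₁ := norm_sub_le (f (x + s • v) - f x) (f (x + s • v) - f x - s • fderiv ℝ f x v)
        have h₂ := norm_sub_le (f (x + s • v)) (f x)
        rw [sub_sub_cancel] at h₁
        linarith
    _ ≤ 2 * A + s ^ 2 * B := by linarith [hA x, hA (x + s • v)]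

theorem HasBoundedDerivs.norm_iteratedFDeriv_le_iSup {f : V → F} (hf : HasBoundedDerivs f)
    (n : ℕ) (x : V) : ‖iteratedFDeriv ℝ n f x‖ ≤ ⨆ y, ‖iteratedFDeriv ℝ n f y‖ :=
  le_ciSup (bddAbove_def.2 <| (hf.2 n).imp fun _ h => Set.forall_mem_range.2 h) x

theorem HasBoundedDerivs.mul_iSup_norm_iteratedFDeriv_succ_le {f : V → F}
    (hf : HasBoundedDerivs f) (k : ℕ) {s : ℝ} (hs : 0 < s) :
    s * ⨆ x, ‖iteratedFDeriv ℝ (k + 1) f x‖ ≤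
      2 * (⨆ x, ‖iteratedFDeriv ℝ k f x‖) + s ^ 2 * ⨆ x, ‖iteratedFDeriv ℝ (k + 2) f x‖ := by
  rw [← le_div_iff₀' hs]
  refine ciSup_le fun x => ?_
  rw [le_div_iff₀' hs, ← norm_fderiv_iteratedFDeriv]
  have hf2 : ContDiff ℝ 2 (iteratedFDeriv ℝ k f) :=
    (hf.contDiff_nat (k + 2)).iteratedFDeriv_right (by push_cast; rw [add_comm])
  refine mul_norm_fderiv_le hf2 (hf.norm_iteratedFDeriv_le_iSup k) (fun y => ?_) hs x
  rw [norm_iteratedFDeriv_iteratedFDeriv, add_comm]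
  exact hf.norm_iteratedFDeriv_le_iSup _ y

theorem HasBoundedDerivs.exists_pow_mul_norm_iteratedFDeriv_le (m : ℕ) :
    ∃ C : ℝ, 0 ≤ C ∧ ∀ {f : V → F}, HasBoundedDerivs f → ∀ {A B s : ℝ}, (∀ x, ‖f x‖ ≤ A) →
      (∀ x, ‖iteratedFDeriv ℝ m f x‖ ≤ B) → 0 < s →
      ∀ k ≤ m, ∀ x, s ^ k * ‖iteratedFDeriv ℝ k f x‖ ≤ C * (A + s ^ m * B) := by
  obtain ⟨C, hC, key⟩ := exists_forall_le_mul_add_of_mul_succ_le m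
  refine ⟨C, by linarith, fun {f} hf A B s hA hB hs k hk x => ?_⟩
  set a : ℕ → ℝ := fun n => ⨆ x, ‖iteratedFDeriv ℝ n f x‖
  have le_a : ∀ n x, ‖iteratedFDeriv ℝ n f x‖ ≤ a n := hf.norm_iteratedFDeriv_le_iSup
  have scaled := key (fun n => s ^ n * a n)
    (fun n => mul_nonneg (by positivity) ((norm_nonneg _).trans (le_a n x)))
    (fun n τ hτ => by
      have h := mul_le_mul_of_nonneg_left
        (hf.mul_iSup_norm_iteratedFDeriv_succ_le n (mul_pos hτ hs)) (pow_nonneg hs.le n)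
      calc _ = s ^ n * (τ * s * a (n + 1)) := by ring
        _ ≤ _ := h
        _ = _ := by ring) k hk
  calc s ^ k * ‖iteratedFDeriv ℝ k f x‖ ≤ s ^ k * a k := by gcongr; exact le_a k x
    _ ≤ C * (a 0 + s ^ m * a m) := by simpa using scaled
    _ ≤ C * (A + s ^ m * B) := by
      gcongr
      · exact ciSup_le fun y => by simpa using hA y
      · exact ciSup_le hB

-- With `t = s ^ (2 * (n + 1))` the sup norm is `O(t)` and the top derivative `O(1 / t)`. The scale
-- `s` balances the two, and the exponent leaves a factor `s` to spare at every order `≤ n`.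
theorem HasBoundedDerivs.exists_norm_iteratedFDeriv_le_mul_of_scale (n : ℕ) (A B : ℝ) :
    ∃ C : ℝ, ∀ {f : V → F}, HasBoundedDerivs f → ∀ {s : ℝ}, 0 < s → s ≤ 1 →
      (∀ x, ‖f x‖ ≤ A * s ^ (2 * (n + 1))) →
      (∀ x, ‖iteratedFDeriv ℝ (4 * (n + 1)) f x‖ ≤ B / s ^ (2 * (n + 1))) →
      ∀ k ≤ n, ∀ x, ‖iteratedFDeriv ℝ k f x‖ ≤ C * s := by
  obtain ⟨C, hC, interp⟩ :=
    HasBoundedDerivs.exists_pow_mul_norm_iteratedFDeriv_le (V := V) (F := F) (4 * (n + 1))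
  refine ⟨C * (A + B), fun {f} hf s hs hs1 hA hB k hk x => ?_⟩
  have hA0 : 0 ≤ A := nonneg_of_mul_nonneg_left ((norm_nonneg _).trans (hA x)) (by positivity)
  have hB0 : 0 ≤ B := by
    have := (norm_nonneg _).trans (hB x)
    rwa [le_div_iff₀ (by positivity), zero_mul] at this
  have h := interp hf hA hB hs k (by omega) x
  refine le_of_mul_le_mul_left ?_ (pow_pos hs k)
  calc s ^ k * ‖iteratedFDeriv ℝ k f x‖
      ≤ C * (A * s ^ (2 * (n + 1)) + s ^ (4 * (n + 1)) * (B / s ^ (2 * (n + 1)))) := h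
    _ = C * (A + B) * s ^ (2 * (n + 1)) := by field_simp; ring
    _ ≤ C * (A + B) * s ^ (k + 1) := by
      gcongr ?_ * ?_
      exact pow_le_pow_of_le_one hs.le hs1 (by omega)
    _ = s ^ k * (C * (A + B) * s) := by ring

theorem contDiff_and_norm_iteratedFDeriv_le_of_telescope [CompleteSpace F] {f : ℕ → V → F}
    {g : V → F} {n : ℕ} {v : ℕ → ℝ} (hv : Summable v) (hf : ∀ j, ContDiff ℝ n (f j))
    (hlim : ∀ x, Tendsto (fun j => f j x) atTop (𝓝 (g x)))
    (hstep : ∀ j, ∀ k ≤ n, ∀ x, ‖iteratedFDeriv ℝ k (f (j + 1) - f j) x‖ ≤ v j) :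
    ContDiff ℝ n g ∧ ∀ k ≤ n, ∀ x,
      ‖iteratedFDeriv ℝ k g x‖ ≤ ‖iteratedFDeriv ℝ k (f 0) x‖ + ∑' j, v j := by
  have hstep' : ∀ (k j : ℕ) (x : V), (k : ℕ∞) ≤ (n : ℕ∞) →
      ‖iteratedFDeriv ℝ k (f (j + 1) - f j) x‖ ≤ v j := fun k j x hk =>
    hstep j k (mod_cast hk) x
  have hdiff : ∀ j, ContDiff ℝ n (f (j + 1) - f j) := fun j => (hf (j + 1)).sub (hf j)
  have hsum : ContDiff ℝ n fun x => ∑' j, (f (j + 1) - f j) x :=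
    contDiff_tsum (N := n) hdiff (fun _ _ => hv) hstep'
  have g_eq : g = f 0 + fun x => ∑' j, (f (j + 1) - f j) x := by
    ext x
    have hs : Summable fun j => (f (j + 1) - f j) x := .of_norm_bounded hv fun j => by
      simpa using hstep j 0 n.zero_le x
    have h := hs.hasSum.tendsto_sum_nat
    simp only [Pi.sub_apply, Finset.sum_range_sub (fun j => f j x)] at h
    have sum_eq := tendsto_nhds_unique h ((hlim x).sub_const (f 0 x))
    exact (add_eq_of_eq_sub' sum_eq).symm
  refine ⟨g_eq ▸ (hf 0).add hsum, fun k hk x => ?_⟩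
  have hk' : (k : WithTop ℕ∞) ≤ n := mod_cast hk
  rw [g_eq, iteratedFDeriv_add_apply ((hf 0).of_le hk').contDiffAt (hsum.of_le hk').contDiffAt,
    iteratedFDeriv_tsum_apply (N := n) hdiff (fun _ _ => hv) hstep' (mod_cast hk)]
  exact norm_add_le_of_le le_rfl (tsum_of_norm_bounded hv.hasSum fun j => hstep j k hk x)

theorem exists_norm_iteratedFDeriv_sub_le_of_approx {f : ℝ → V → F} {g : V → F} {A : ℝ}
    (hf : ∀ t ∈ Set.Ioc (0 : ℝ) 1, ContDiff ℝ (⊤ : ℕ∞) (f t))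
    (hfg : ∀ t ∈ Set.Ioc (0 : ℝ) 1, ∀ x, ‖f t x - g x‖ ≤ A * t)
    (hD : ∀ n, ∃ B, ∀ t ∈ Set.Ioc (0 : ℝ) 1, ∀ x, ‖iteratedFDeriv ℝ n (f t) x‖ ≤ B / t) (n : ℕ) :
    ∃ C, ∀ s ∈ Set.Ioc (0 : ℝ) 1, ∀ k ≤ n, ∀ x,
      ‖iteratedFDeriv ℝ k (f ((s / 2) ^ (2 * (n + 1))) - f (s ^ (2 * (n + 1)))) x‖ ≤ C * s := by
  have bounded {t : ℝ} (ht : t ∈ Set.Ioc (0 : ℝ) 1) : HasBoundedDerivs (f t) :=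
    ⟨hf t ht, fun k => let ⟨B, hB⟩ := hD k; ⟨B / t, hB t ht⟩⟩
  obtain ⟨B, hB⟩ := hD (4 * (n + 1))
  obtain ⟨C, hC⟩ := HasBoundedDerivs.exists_norm_iteratedFDeriv_le_mul_of_scale
    (V := V) (F := F) n (2 * A) ((4 ^ (n + 1) + 1) * B)
  refine ⟨C, fun s ⟨hs, hs1⟩ => ?_⟩
  have hle : (s / 2) ^ (2 * (n + 1)) ≤ s ^ (2 * (n + 1)) := by gcongr; linarith
  have ht : s ^ (2 * (n + 1)) ∈ Set.Ioc (0 : ℝ) 1 := ⟨by positivity, pow_le_one₀ hs.le hs1⟩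
  have ht' : (s / 2) ^ (2 * (n + 1)) ∈ Set.Ioc (0 : ℝ) 1 := ⟨by positivity, hle.trans ht.2⟩
  refine hC ((bounded ht').sub (bounded ht)) hs hs1 (fun x => ?_) fun x => ?_
  · have hA : 0 ≤ A := nonneg_of_mul_nonneg_left ((norm_nonneg _).trans (hfg _ ht x)) ht.1
    calc ‖f ((s / 2) ^ (2 * (n + 1))) x - f (s ^ (2 * (n + 1))) x‖
        ≤ A * (s / 2) ^ (2 * (n + 1)) + A * s ^ (2 * (n + 1)) := by
          rw [← sub_sub_sub_cancel_right _ _ (g x)]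
          exact norm_sub_le_of_le (hfg _ ht' x) (hfg _ ht x)
      _ ≤ A * s ^ (2 * (n + 1)) + A * s ^ (2 * (n + 1)) := by gcongr
      _ = 2 * A * s ^ (2 * (n + 1)) := by ring
  · rw [iteratedFDeriv_sub_apply ((bounded ht').contDiff_nat _).contDiffAt
      ((bounded ht).contDiff_nat _).contDiffAt]
    refine (norm_sub_le_of_le (hB _ ht' x) (hB _ ht x)).trans_eq ?_
    rw [div_pow, pow_mul 2 2, div_div_eq_mul_div]
    ring

theorem HasBoundedDerivs.of_approx [CompleteSpace F] {f : ℝ → V → F} {g : V → F} {A : ℝ}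
    (hf : ∀ t ∈ Set.Ioc (0 : ℝ) 1, ContDiff ℝ (⊤ : ℕ∞) (f t))
    (hfg : ∀ t ∈ Set.Ioc (0 : ℝ) 1, ∀ x, ‖f t x - g x‖ ≤ A * t)
    (hD : ∀ n, ∃ B, ∀ t ∈ Set.Ioc (0 : ℝ) 1, ∀ x, ‖iteratedFDeriv ℝ n (f t) x‖ ≤ B / t) :
    HasBoundedDerivs g := by
  suffices h : ∀ n : ℕ, ContDiff ℝ n g ∧ ∃ C, ∀ x, ‖iteratedFDeriv ℝ n g x‖ ≤ C from
    ⟨contDiff_infty.2 fun n => (h n).1, fun n => (h n).2⟩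
  intro n
  obtain ⟨C, hC⟩ := exists_norm_iteratedFDeriv_sub_le_of_approx hf hfg hD n
  set t : ℕ → ℝ := fun j => ((1 / 2) ^ j) ^ (2 * (n + 1))
  have half_pow_mem : ∀ j : ℕ, (1 / 2 : ℝ) ^ j ∈ Set.Ioc (0 : ℝ) 1 := fun j =>
    ⟨by positivity, pow_le_one₀ (by norm_num) (by norm_num)⟩
  have t_mem : ∀ j, t j ∈ Set.Ioc (0 : ℝ) 1 := fun j =>
    ⟨by positivity, pow_le_one₀ (half_pow_mem j).1.le (half_pow_mem j).2⟩
  have hstep : ∀ j, ∀ k ≤ n, ∀ x,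
      ‖iteratedFDeriv ℝ k (f (t (j + 1)) - f (t j)) x‖ ≤ C * (1 / 2) ^ j := fun j => by
    have := hC _ (half_pow_mem j)
    rwa [div_eq_mul_one_div, ← pow_succ] at this
  have t_tendsto : Tendsto t atTop (𝓝 0) := by
    have := (tendsto_pow_atTop_nhds_zero_of_lt_one (r := (1 / 2 : ℝ)) (by norm_num)
      (by norm_num)).pow (2 * (n + 1))
    rwa [zero_pow (by omega)] at this
  have hlim : ∀ x, Tendsto (fun j => f (t j) x) atTop (𝓝 (g x)) := fun x => by
    refine tendsto_iff_norm_sub_tendsto_zero.2 <| squeeze_zero (fun _ => norm_nonneg _)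
      (fun j => hfg _ (t_mem j) x) ?_
    simpa using t_tendsto.const_mul A
  obtain ⟨hg, hbound⟩ := contDiff_and_norm_iteratedFDeriv_le_of_telescope
    ((summable_geometric_of_lt_one (by norm_num) (by norm_num)).mul_left C)
    (fun j => contDiff_infty.1 (hf _ (t_mem j)) n) hlim hstep
  obtain ⟨B, hB⟩ := hD n
  exact ⟨hg, _, fun x => (hbound n le_rfl x).trans (add_le_add_left (hB _ (t_mem 0) x) _)⟩


/-- The Euler (radial) derivative `x · ∇f`, extending `xdotOp` and `xdotC` to functions between
normed spaces. -/
def eulerDeriv (f : V → F) (x : V) : F :=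
  fderiv ℝ f x x

theorem contDiff_eulerDeriv {m n : WithTop ℕ∞} {f : V → F} (hf : ContDiff ℝ n f)
    (hmn : m + 1 ≤ n) : ContDiff ℝ m (eulerDeriv f) :=
  (hf.fderiv_right hmn).clm_apply contDiff_id

theorem eulerDeriv_sub {f g : V → F} (hf : Differentiable ℝ f) (hg : Differentiable ℝ g) :
    eulerDeriv (f - g) = eulerDeriv f - eulerDeriv g := by
  ext x
  simp only [eulerDeriv, fderiv_sub (hf x) (hg x), Pi.sub_apply, sub_apply]

theorem eulerDeriv_const_smul (c : ℝ) (f : V → F) :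
    eulerDeriv (c • f) = c • eulerDeriv f := by
  ext x
  simp only [eulerDeriv, fderiv_const_smul_field, Pi.smul_apply, smul_apply]

theorem hasDerivAt_comp_exp_smul {f : V → F} (hf : Differentiable ℝ f) (x : V) (r : ℝ) :
    HasDerivAt (fun r => f (Real.exp r • x)) (eulerDeriv f (Real.exp r • x)) r :=
  (hf _).hasFDerivAt.comp_hasDerivAt r ((Real.hasDerivAt_exp r).smul_const x)

theorem norm_comp_exp_smul_sub_le {f : V → F} (hf : ContDiff ℝ 2 f) {K : ℝ}
    (hK : ∀ x, ‖eulerDeriv (eulerDeriv f) x‖ ≤ K) (r : ℝ) (x : V) :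
    ‖f (Real.exp r • x) - f x - r • eulerDeriv f x‖ ≤ K * r ^ 2 := by
  have deriv_eq : deriv (fun r => f (Real.exp r • x)) = fun r => eulerDeriv f (Real.exp r • x) :=
    funext fun r => (hasDerivAt_comp_exp_smul (hf.differentiable two_ne_zero) x r).deriv
  have deriv_deriv_eq (r : ℝ) : deriv (fun r => eulerDeriv f (Real.exp r • x)) r =
      eulerDeriv (eulerDeriv f) (Real.exp r • x) :=
    (hasDerivAt_comp_exp_smul ((contDiff_eulerDeriv (m := 1) hf (by norm_num)).differentiable
      one_ne_zero) x r).deriv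
  have h := norm_add_sub_sub_fderiv_le (f := fun r => f (Real.exp r • x)) (B := K)
    (hf.comp (Real.contDiff_exp.smul contDiff_const)) (fun r => by
      rw [norm_iteratedFDeriv_eq_norm_iteratedDeriv, iteratedDeriv_succ, iteratedDeriv_one,
        deriv_eq, deriv_deriv_eq]
      exact hK _) 0 r
  simpa [← toSpanSingleton_deriv, deriv_eq] using h

/-- The difference quotient `t⁻¹ (f(x) - f(e⁻ᵗ x))` of `f` along the dilation flow. -/
def dilationQuotient (f : V → F) (t : ℝ) : V → F :=
  t⁻¹ • (f - fun x => f (Real.exp (-t) • x))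

theorem contDiff_dilationQuotient {n : WithTop ℕ∞} {f : V → F} (hf : ContDiff ℝ n f) (t : ℝ) :
    ContDiff ℝ n (dilationQuotient f t) :=
  (hf.sub (hf.comp (contDiff_const_smul _))).const_smul t⁻¹

theorem norm_dilationQuotient_sub_eulerDeriv_le {f : V → F} (hf : ContDiff ℝ 2 f) {K : ℝ}
    (hK : ∀ x, ‖eulerDeriv (eulerDeriv f) x‖ ≤ K) {t : ℝ} (ht : 0 < t) (x : V) :
    ‖dilationQuotient f t x - eulerDeriv f x‖ ≤ K * t := by
  have quotient_sub_eq : dilationQuotient f t x - eulerDeriv f x =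
      (-t⁻¹) • (f (Real.exp (-t) • x) - f x - (-t) • eulerDeriv f x) := by
    simp only [dilationQuotient, Pi.smul_apply, Pi.sub_apply, smul_sub, neg_smul, smul_neg,
      inv_smul_smul₀ ht.ne']
    abel
  rw [quotient_sub_eq, norm_smul, norm_neg, norm_inv, Real.norm_of_nonneg ht.le,
    inv_mul_le_iff₀ ht]
  refine (norm_comp_exp_smul_sub_le hf hK (-t) x).trans_eq ?_
  ring

theorem norm_iteratedFDeriv_dilationQuotient_le {f : V → F} {n : ℕ} (hf : ContDiff ℝ n f) {C : ℝ}
    (hC : ∀ x, ‖iteratedFDeriv ℝ n f x‖ ≤ C) {t : ℝ} (ht : 0 < t) (x : V) :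
    ‖iteratedFDeriv ℝ n (dilationQuotient f t) x‖ ≤ 2 * C / t := by
  have hcomp : ContDiff ℝ n fun x => f (Real.exp (-t) • x) := hf.comp (contDiff_const_smul _)
  have norm_comp_le : ‖iteratedFDeriv ℝ n (fun x => f (Real.exp (-t) • x)) x‖ ≤ C := by
    rw [iteratedFDeriv_comp_const_smul _ hf]
    simp only [norm_smul]
    refine (mul_le_of_le_one_left (norm_nonneg _) ?_).trans (hC _)
    rw [norm_pow, Real.norm_of_nonneg (Real.exp_nonneg _)]
    exact pow_le_one₀ (Real.exp_nonneg _) (Real.exp_le_one_iff.2 (by linarith))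
  have hsub : ContDiff ℝ n (f - fun x => f (Real.exp (-t) • x)) := hf.sub hcomp
  rw [dilationQuotient, iteratedFDeriv_const_smul_apply hsub.contDiffAt, norm_smul,
    iteratedFDeriv_sub_apply hf.contDiffAt hcomp.contDiffAt, norm_inv, Real.norm_of_nonneg ht.le,
    inv_mul_eq_div, two_mul]
  gcongr
  exact norm_sub_le_of_le (hC x) norm_comp_le

theorem HasBoundedDerivs.eulerDeriv [CompleteSpace F] {f : V → F} (hf : HasBoundedDerivs f)
    {K : ℝ} (hK : ∀ x, ‖eulerDeriv (eulerDeriv f) x‖ ≤ K) : HasBoundedDerivs (eulerDeriv f) := by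
  refine .of_approx (fun t _ => contDiff_dilationQuotient hf.1 t)
    (fun t ht => norm_dilationQuotient_sub_eulerDeriv_le (hf.contDiff_nat 2) hK ht.1) fun n => ?_
  obtain ⟨C, hC⟩ := hf.2 n
  exact ⟨2 * C, fun t ht => norm_iteratedFDeriv_dilationQuotient_le (hf.contDiff_nat n) hC ht.1⟩

theorem contDiff_iterate_eulerDeriv {f : V → F} (hf : ContDiff ℝ (⊤ : ℕ∞) f) (n : ℕ) :
    ContDiff ℝ (⊤ : ℕ∞) (eulerDeriv^[n] f) := by
  induction n with
  | zero => exact hf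
  | succ n ih =>
    rw [Function.iterate_succ_apply']
    exact contDiff_eulerDeriv ih (by simp)

theorem iterate_eulerDeriv_sub {f g : V → F} (hf : ContDiff ℝ (⊤ : ℕ∞) f)
    (hg : ContDiff ℝ (⊤ : ℕ∞) g) (n : ℕ) :
    eulerDeriv^[n] (f - g) = eulerDeriv^[n] f - eulerDeriv^[n] g := by
  induction n with
  | zero => rfl
  | succ n ih =>
    simp only [Function.iterate_succ_apply', ih]
    exact eulerDeriv_sub ((contDiff_iterate_eulerDeriv hf n).differentiable (by simp))
      ((contDiff_iterate_eulerDeriv hg n).differentiable (by simp))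

theorem iterate_eulerDeriv_const_smul (c : ℝ) (f : V → F) (n : ℕ) :
    eulerDeriv^[n] (c • f) = c • eulerDeriv^[n] f :=
  (Function.Commute.iterate_left (eulerDeriv_const_smul c) n).eq f

/-- The symbol class `S_dil(V; F)` of functions in `C_b^∞` all of whose iterated Euler derivatives
are bounded: `MemSdil` for functions between arbitrary normed spaces. -/
def IsDilationSymbol (f : V → F) : Prop :=
  HasBoundedDerivs f ∧ ∀ n : ℕ, ∃ C : ℝ, ∀ x, ‖eulerDeriv^[n] f x‖ ≤ C

theorem IsDilationSymbol.sub {f g : V → F} (hf : IsDilationSymbol f) (hg : IsDilationSymbol g) :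
    IsDilationSymbol (f - g) := by
  refine ⟨hf.1.sub hg.1, fun n => ?_⟩
  obtain ⟨A, hA⟩ := hf.2 n
  obtain ⟨B, hB⟩ := hg.2 n
  refine ⟨A + B, fun x => ?_⟩
  rw [iterate_eulerDeriv_sub hf.1.1 hg.1.1]
  exact norm_sub_le_of_le (hA x) (hB x)

theorem IsDilationSymbol.const_smul {f : V → F} (hf : IsDilationSymbol f) (c : ℝ) :
    IsDilationSymbol (c • f) := by
  refine ⟨hf.1.const_smul c, fun n => ?_⟩
  obtain ⟨A, hA⟩ := hf.2 n
  refine ⟨‖c‖ * A, fun x => ?_⟩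
  rw [iterate_eulerDeriv_const_smul, Pi.smul_apply, norm_smul]
  gcongr
  exact hA x

theorem IsDilationSymbol.eulerDeriv [CompleteSpace F] {f : V → F} (hf : IsDilationSymbol f) :
    IsDilationSymbol (eulerDeriv f) := by
  obtain ⟨K, hK⟩ := hf.2 2
  exact ⟨hf.1.eulerDeriv hK, fun n => hf.2 (n + 1)⟩

theorem eulerDeriv_ofReal {a : V → ℝ} {x : V} (ha : DifferentiableAt ℝ a x) :
    eulerDeriv (fun y => (a y : ℂ)) x = eulerDeriv a x := by
  have h : HasFDerivAt (fun y => (a y : ℂ)) _ x :=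
    Complex.ofRealCLM.hasFDerivAt.comp x ha.hasFDerivAt
  rw [eulerDeriv, h.fderiv]
  rfl

theorem contDiff_fderiv_apply_const {m n : WithTop ℕ∞} {f : V → F} (hf : ContDiff ℝ n f)
    (hmn : m + 1 ≤ n) (v : V) : ContDiff ℝ m fun x => fderiv ℝ f x v :=
  (hf.fderiv_right hmn).clm_apply contDiff_const

theorem fderiv_eulerDeriv_apply {f : V → F} (hf : ContDiff ℝ 2 f) (x v : V) :
    fderiv ℝ (eulerDeriv f) x v = eulerDeriv (fun y => fderiv ℝ f y v) x + fderiv ℝ f x v := by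
  have hf' : DifferentiableAt ℝ (fderiv ℝ f) x :=
    (hf.fderiv_right (m := 1) (by norm_num)).differentiable one_ne_zero x
  have symm : fderiv ℝ (fderiv ℝ f) x v x = fderiv ℝ (fderiv ℝ f) x x v :=
    hf.contDiffAt.isSymmSndFDerivAt (by simp) v x
  have h : HasFDerivAt (eulerDeriv f) _ x := hf'.hasFDerivAt.clm_apply (hasFDerivAt_id x)
  have h' := hf'.hasFDerivAt.clm_apply (hasFDerivAt_const v x)
  rw [h.fderiv, eulerDeriv, h'.fderiv]
  simp [symm, add_comm]

end

section

variable {V 𝔸 : Type*} [NormedAddCommGroup V] [NormedSpace ℝ V] [NormedRing 𝔸] [NormedAlgebra ℝ 𝔸]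

theorem eulerDeriv_mul {a b : V → 𝔸} (ha : Differentiable ℝ a) (hb : Differentiable ℝ b) :
    eulerDeriv (a * b) = a * eulerDeriv b + eulerDeriv a * b := by
  ext x
  rw [eulerDeriv, fderiv_mul' (ha x) (hb x)]
  rfl

theorem differentiable_mul_fderiv {a u : V → 𝔸} (ha : Differentiable ℝ a) (hu : ContDiff ℝ 2 u)
    (v : V) : Differentiable ℝ fun y => a y * fderiv ℝ u y v :=
  ha.mul ((contDiff_fderiv_apply_const hu (m := 1) (by norm_num) v).differentiable one_ne_zero)

theorem fderiv_mul_fderiv_eulerDeriv_sub {b u : V → 𝔸} (hb : ContDiff ℝ 2 b)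
    (hu : ContDiff ℝ 3 u) (v w x : V) :
    fderiv ℝ (fun y => b y * fderiv ℝ (eulerDeriv u) y v) x w -
        eulerDeriv (fun y => fderiv ℝ (fun z => b z * fderiv ℝ u z v) y w) x =
      fderiv ℝ (fun y => (2 * b y - eulerDeriv b y) * fderiv ℝ u y v) x w := by
  set g : V → 𝔸 := fun y => fderiv ℝ u y v
  have hg : ContDiff ℝ 2 g := contDiff_fderiv_apply_const hu (by norm_num) v
  have hb' : ContDiff ℝ 1 (eulerDeriv b) := contDiff_eulerDeriv hb (by norm_num)
  have hbg : ContDiff ℝ 2 (b * g) := hb.mul hg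
  have d_bg : DifferentiableAt ℝ (b * g) x := hbg.differentiable two_ne_zero x
  have d_Ebg : DifferentiableAt ℝ (eulerDeriv (b * g)) x :=
    (contDiff_eulerDeriv hbg (m := 1) (by norm_num)).differentiable one_ne_zero x
  have d_b'g : DifferentiableAt ℝ (eulerDeriv b * g) x :=
    (hb'.differentiable one_ne_zero x).mul (hg.differentiable two_ne_zero x)
  have lhs_eq : (fun y => b y * fderiv ℝ (eulerDeriv u) y v) =
      eulerDeriv (b * g) + b * g - eulerDeriv b * g := by
    rw [eulerDeriv_mul (hb.differentiable two_ne_zero) (hg.differentiable two_ne_zero)]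
    ext y
    rw [fderiv_eulerDeriv_apply (hu.of_le (by norm_num))]
    simp only [Pi.add_apply, Pi.sub_apply, Pi.mul_apply, mul_add, g]
    abel
  have rhs_eq : (fun y => (2 * b y - eulerDeriv b y) * g y) = b * g + b * g - eulerDeriv b * g := by
    ext y
    simp only [Pi.add_apply, Pi.sub_apply, Pi.mul_apply, sub_mul, two_mul, add_mul]
  rw [lhs_eq, rhs_eq, fderiv_sub (d_Ebg.add d_bg) d_b'g, fderiv_add d_Ebg d_bg,
    fderiv_sub (d_bg.add d_bg) d_b'g, fderiv_add d_bg d_bg]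
  simp only [add_apply, sub_apply, fderiv_eulerDeriv_apply hbg]
  change _ - eulerDeriv (fun y => fderiv ℝ (b * g) y w) x = _
  abel

end

section

variable {d : ℕ}

theorem divGradC_add {b : Ed d → Fin d → Fin d → ℂ}
    (hb : ∀ j k, Differentiable ℝ fun x => b x j k) {u v : Ed d → ℂ} (hu : ContDiff ℝ 2 u)
    (hv : ContDiff ℝ 2 v) :
    divGradC d b (u + v) = divGradC d b u + divGradC d b v := by
  ext x
  simp only [divGradC, Pi.add_apply, ← neg_add, ← Finset.sum_add_distrib]
  congr! with j _ k _
  have fderiv_add_apply (y : Ed d) : fderiv ℝ (u + v) y = fderiv ℝ u y + fderiv ℝ v y :=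
    fderiv_add (hu.differentiable two_ne_zero y) (hv.differentiable two_ne_zero y)
  simp only [fderiv_add_apply, add_apply, mul_add]
  rw [fderiv_fun_add (differentiable_mul_fderiv (hb j k) hu _ x)
    (differentiable_mul_fderiv (hb j k) hv _ x), add_apply]

theorem divGradC_const_smul (c : ℂ) (b : Ed d → Fin d → Fin d → ℂ) (u : Ed d → ℂ) :
    divGradC d b (c • u) = c • divGradC d b u := by
  ext x
  simp only [divGradC, Pi.smul_apply, smul_neg, Finset.smul_sum]
  congr! with j _ k _
  have fderiv_smul_apply (g : Ed d → ℂ) (y v : Ed d) :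
      fderiv ℝ (fun z => c • g z) y v = c • fderiv ℝ g y v :=
    DFunLike.congr_fun (congrFun (fderiv_const_smul_field c (f := g)) y) v
  have fderiv_smul_u (y v : Ed d) : fderiv ℝ (c • u) y v = c • fderiv ℝ u y v :=
    fderiv_smul_apply u y v
  simp only [fderiv_smul_u, mul_smul_comm, fderiv_smul_apply]

theorem opA_eq_smul (u : Ed d → ℂ) :
    opA d u = (Complex.I)⁻¹ • (eulerDeriv u + (d / 2 : ℂ) • u) := by
  ext x
  exact div_eq_inv_mul _ _

theorem eulerDeriv_divGradC {b : Ed d → Fin d → Fin d → ℂ}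
    (hb : ∀ j k, ContDiff ℝ 2 fun x => b x j k) {u : Ed d → ℂ} (hu : ContDiff ℝ 3 u) (x : Ed d) :
    eulerDeriv (divGradC d b u) x = -∑ j, ∑ k,
      eulerDeriv (fun y => fderiv ℝ (fun z => b z j k * fderiv ℝ u z (EuclideanSpace.single k 1)) y
        (EuclideanSpace.single j 1)) x := by
  have hdiff (j k : Fin d) : DifferentiableAt ℝ (fun y => fderiv ℝ (fun z => b z j k *
      fderiv ℝ u z (EuclideanSpace.single k 1)) y (EuclideanSpace.single j 1)) x :=
    (contDiff_fderiv_apply_const ((hb j k).mul (contDiff_fderiv_apply_const hu (by norm_num) _))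
      (m := 1) (by norm_num) _).differentiable one_ne_zero x
  unfold eulerDeriv divGradC
  rw [fderiv_fun_neg, fderiv_fun_sum fun j _ => DifferentiableAt.fun_sum fun k _ => hdiff j k]
  simp only [fderiv_fun_sum fun k _ => hdiff _ k, neg_apply, sum_apply]

theorem divGradC_eulerDeriv_sub {b : Ed d → Fin d → Fin d → ℂ}
    (hb : ∀ j k, ContDiff ℝ 2 fun x => b x j k) {u : Ed d → ℂ} (hu : ContDiff ℝ 3 u) (x : Ed d) :
    divGradC d b (eulerDeriv u) x - eulerDeriv (divGradC d b u) x =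
      divGradC d (fun y j k => 2 * b y j k - eulerDeriv (fun z => b z j k) y) u x := by
  rw [eulerDeriv_divGradC hb hu, divGradC, divGradC, neg_sub_neg, ← neg_sub]
  simp only [← Finset.sum_sub_distrib, fderiv_mul_fderiv_eulerDeriv_sub (hb _ _) hu]

theorem commutator_divGradC_opA {b : Ed d → Fin d → Fin d → ℂ}
    (hb : ∀ j k, ContDiff ℝ 2 fun x => b x j k) {u : Ed d → ℂ} (hu : ContDiff ℝ 3 u) (x : Ed d) :
    Complex.I * (divGradC d b (opA d u) x - opA d (divGradC d b u) x) =
      divGradC d (fun y j k => 2 * b y j k - eulerDeriv (fun z => b z j k) y) u x := by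
  have hEu : ContDiff ℝ 2 (eulerDeriv u) := contDiff_eulerDeriv hu (by norm_num)
  have hu' : ContDiff ℝ 2 ((d / 2 : ℂ) • u) :=
    (hu.of_le (m := 2) (by norm_num)).const_smul (d / 2 : ℂ)
  rw [← divGradC_eulerDeriv_sub hb hu, opA_eq_smul, opA_eq_smul, divGradC_const_smul,
    divGradC_add (fun j k => (hb j k).differentiable two_ne_zero) hEu hu',
    divGradC_const_smul, ← Pi.sub_apply, ← smul_sub, add_sub_add_right_eq_sub, Pi.smul_apply,
    smul_eq_mul, mul_inv_cancel_left₀ Complex.I_ne_zero, Pi.sub_apply]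

theorem commutator_divGrad_opA {b : Ed d → Fin d → Fin d → ℝ}
    (hb : ∀ j k, ContDiff ℝ 2 fun x => b x j k) {u : Ed d → ℂ} (hu : ContDiff ℝ 3 u) (x : Ed d) :
    Complex.I * (divGrad d b (opA d u) x - opA d (divGrad d b u) x) =
      divGrad d (commCoef d b) u x := by
  have commCoef_eq (y : Ed d) (j k : Fin d) : (commCoef d b y j k : ℂ) =
      2 * (b y j k : ℂ) - eulerDeriv (fun z => (b z j k : ℂ)) y := by
    rw [eulerDeriv_ofReal ((hb j k).differentiable two_ne_zero y), commCoef, Complex.ofReal_sub,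
      Complex.ofReal_mul, Complex.ofReal_ofNat]
    rfl
  have h := commutator_divGradC_opA (b := fun x j k => (b x j k : ℂ))
    (fun j k => Complex.ofRealCLM.contDiff.comp (hb j k)) hu x
  simp only [← commCoef_eq] at h
  exact h

theorem memSdil_commCoef {b : Ed d → Fin d → Fin d → ℝ} {j k : Fin d}
    (hb : MemSdil d fun x => b x j k) : MemSdil d fun x => commCoef d b x j k :=
  have hb : IsDilationSymbol fun x => b x j k := hb
  (hb.const_smul 2).sub hb.eulerDeriv

end

theorem statement4_general (d : ℕ) (b : Ed d → Fin d → Fin d → ℝ)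
    (hb : ∀ j k, MemSdil d fun x => b x j k) :
    (∀ j k, MemSdil d fun x => commCoef d b x j k) ∧
    ∀ (u : Ed d → ℂ), ContDiff ℝ 3 u → ∀ x : Ed d,
      Complex.I * (divGrad d b (opA d u) x - opA d (divGrad d b u) x)
        = divGrad d (commCoef d b) u x :=
  ⟨fun j k => memSdil_commCoef (hb j k), fun _ hu x =>
    commutator_divGrad_opA (fun j k => HasBoundedDerivs.contDiff_nat (hb j k).1 2) hu x⟩

/-- **Lemma (commutator of a div-grad operator with the generator of dilations).**
If `B = ∑ D_j (b_{jk} D_k)` is of div-grad type (coefficients in `S_dil`) and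
`A = (x·∇ + ∇·x)/(2i)`, then `i[B,A]` is again of div-grad type; more precisely
`i[B,A] = ∑ D_j (2 b_{jk} - x·∇ b_{jk}) D_k` (computed on Schwartz functions). -/
theorem statement4 (d : ℕ) (b : Ed d → Fin d → Fin d → ℝ)
    (hb : ∀ j k, MemSdil d fun x => b x j k) :
    (∀ j k, MemSdil d fun x => commCoef d b x j k) ∧
    ∀ (u : SchwartzMap (Ed d) ℂ) (x : Ed d),
      Complex.I * (divGrad d b (opA d ⇑u) x - opA d (divGrad d b ⇑u) x)
        = divGrad d (commCoef d b) (⇑u) x :=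
  (statement4_general d b hb).imp_right fun h u => h u (u.smooth 3)
end
end

section
/- For all u₁, u₂ ∈ 𝒮(ℝ^d) and all 0 < h < 1, the commutator form satisfies the representation formula (i[P, F(hA)]u₁, u₂) = (h/2) ∫_ℝ e^{-|t|} ( (1/t) ∫₀^t ( e^{ithA} P_{sh} u₁, u₂ ) ds ) dt, where F(λ) = arctan(λ). -/
open MeasureTheory Filter Topology Complex
open scoped Real ENNReal FourierTransform ComplexConjugate

noncomputable section

/-!
Since `arctan λ = ∫₀^∞ sin (tλ) e^{-t} dt / t`, the commutator with `F(hA)` is a superposition of the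
forms `f₁ t - f₂ t`, where `f₁ t = (e^{ithA} u₁, P u₂)` and `f₂ t = (e^{ithA} P u₁, u₂)`. Writing the
sine as a difference of exponentials turns the integral over `t > 0` into the integral over `ℝ` of
`e^{-|t|}` times the difference quotients of `f₁` and `f₂` at `0`; these are bounded because `f₁` and
`f₂` are bounded and differentiable, so the singularity `1 / t` does no harm.

It remains to write `f₁ t - f₂ t` as `h ∫₀^t (e^{ithA} P_{sh} u₁, u₂) ds`. By a change of variables
the Dirichlet form of `e^{isA} φ` and `e^{isA} ψ` is that of `φ` and `ψ` with the coefficients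
`e^{2s} G (e^{-s} x)`. Differentiating under the integral sign produces the coefficients
`2G - x·∇G` of `i[P, A]`, that is, the form `(P_s φ, ψ)`. Integrating in `s` and taking
`ψ = e^{-ithA} u₂` gives the claim.
-/

section RealLine

variable {E : Type*} [NormedAddCommGroup E] [NormedSpace ℝ E]

lemma integrable_exp_neg_abs : Integrable fun t : ℝ => Real.exp (-|t|) := by
  rw [← integrableOn_univ, ← Set.Iic_union_Ioi (a := (0 : ℝ))]
  refine IntegrableOn.union ?_ ?_
  · refine (integrableOn_exp_Iic 0).congr_fun (fun t ht => ?_) measurableSet_Iic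
    rw [abs_of_nonpos ht, neg_neg]
  · refine (integrableOn_exp_neg_Ioi 0).congr_fun (fun t ht => ?_) measurableSet_Ioi
    rw [abs_of_pos ht]

lemma exists_norm_slope_le {f : ℝ → E} {a M : ℝ} (hf : DifferentiableAt ℝ f a)
    (hM : ∀ t, ‖f t‖ ≤ M) : ∃ C, ∀ t, ‖slope f a t‖ ≤ C := by
  have near : ∀ᶠ t in 𝓝[≠] a, ‖slope f a t‖ < ‖deriv f a‖ + 1 :=
    hf.hasDerivAt.tendsto_slope.norm.eventually_lt_const (lt_add_one _)
  obtain ⟨δ, hδ, hball⟩ := Metric.eventually_nhds_iff.mp (eventually_nhdsWithin_iff.mp near)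
  refine ⟨max (‖deriv f a‖ + 1) (δ⁻¹ * (M + M)), fun t => ?_⟩
  rcases eq_or_ne t a with rfl | hta
  · rw [slope_same, norm_zero]
    exact le_max_of_le_left (by positivity)
  rcases lt_or_ge (dist t a) δ with hlt | hge
  · exact (hball hlt hta).le.trans (le_max_left _ _)
  · refine le_trans ?_ (le_max_right _ _)
    rw [slope, norm_smul, norm_inv, ← dist_eq_norm]
    gcongr
    exact (norm_sub_le _ _).trans (add_le_add (hM t) (hM a))

lemma integrable_exp_neg_abs_smul_slope {f : ℝ → E} {a M : ℝ} (hfc : Continuous f)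
    (hfd : DifferentiableAt ℝ f a) (hM : ∀ t, ‖f t‖ ≤ M) :
    Integrable fun t : ℝ => Real.exp (-|t|) • slope f a t := by
  obtain ⟨C, hC⟩ := exists_norm_slope_le hfd hM
  refine integrable_exp_neg_abs.smul_bdd C ?_ (ae_of_all _ hC)
  have hinv : Measurable fun t : ℝ => (t - a)⁻¹ := by fun_prop
  exact hinv.aestronglyMeasurable.smul (hfc.sub continuous_const).aestronglyMeasurable

lemma integral_Ioi_exp_neg_div_smul_sub_comp_neg {f : ℝ → E} {M : ℝ} (hfc : Continuous f)
    (hfd : DifferentiableAt ℝ f 0) (hM : ∀ t, ‖f t‖ ≤ M) :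
    ∫ t in Set.Ioi (0 : ℝ), (Real.exp (-t) / t) • (f t - f (-t))
      = ∫ t : ℝ, Real.exp (-|t|) • slope f 0 t := by
  have hint := integrable_exp_neg_abs_smul_slope hfc hfd hM
  have hint_neg : Integrable fun t : ℝ => Real.exp (-|t|) • slope f 0 (-t) := by
    simpa only [abs_neg] using hint.comp_neg
  rw [← intervalIntegral.integral_Iic_add_Ioi hint.integrableOn hint.integrableOn,
    ← neg_zero, ← integral_comp_neg_Ioi, neg_zero, add_comm]
  simp only [abs_neg]
  rw [← integral_add hint.integrableOn hint_neg.integrableOn]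
  refine setIntegral_congr_fun measurableSet_Ioi fun t ht => ?_
  have ht' : |t| = t := abs_of_pos ht
  simp only [slope, vsub_eq_sub, sub_zero, ht', inv_neg]
  module

end RealLine

section DilatedIntegrals

variable {E F G H : Type*} [NormedAddCommGroup E] [NormedSpace ℝ E]
  [NormedAddCommGroup F] [NormedSpace ℝ F] [NormedAddCommGroup G] [NormedSpace ℝ G]
  [NormedAddCommGroup H] [NormedSpace ℝ H]

lemma hasTemperateGrowth_fderiv {a : E → F} (ha : a.HasTemperateGrowth) :
    (fderiv ℝ a).HasTemperateGrowth := by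
  refine ⟨ha.1.fderiv_right (by simp), fun n => ?_⟩
  obtain ⟨k, C, hC⟩ := ha.2 (n + 1)
  exact ⟨k, C, fun x => norm_iteratedFDeriv_fderiv.trans_le (hC x)⟩

lemma hasTemperateGrowth_fderiv_apply_self {a : E → F} (ha : a.HasTemperateGrowth) :
    (fun x => fderiv ℝ a x x).HasTemperateGrowth :=
  (ContinuousLinearMap.id ℝ (E →L[ℝ] F)).bilinear_hasTemperateGrowth
    (hasTemperateGrowth_fderiv ha) Function.HasTemperateGrowth.id'

lemma hasTemperateGrowth_comp_const_smul {a : E → F} (ha : a.HasTemperateGrowth) (r : ℝ) :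
    (fun x => a (r • x)).HasTemperateGrowth :=
  ha.comp (r • ContinuousLinearMap.id ℝ E).hasTemperateGrowth

lemma exists_norm_fderiv_const_smul_apply_self_le {a : E → F} (ha : a.HasTemperateGrowth)
    (R : ℝ) : ∃ (k : ℕ) (C : ℝ), ∀ r x, |r| ≤ R → ‖fderiv ℝ a (r • x) x‖ ≤ C * (1 + ‖x‖) ^ k := by
  obtain ⟨k, C, hC⟩ := (hasTemperateGrowth_fderiv ha).2 0
  refine ⟨k + 1, |C| * (1 + |R|) ^ k, fun r x hr => ?_⟩
  have hscale : 1 + ‖r • x‖ ≤ (1 + |R|) * (1 + ‖x‖) := by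
    rw [norm_smul, Real.norm_eq_abs]
    nlinarith [mul_le_mul_of_nonneg_right (hr.trans (le_abs_self R)) (norm_nonneg x),
      abs_nonneg R, norm_nonneg x]
  calc ‖fderiv ℝ a (r • x) x‖ ≤ ‖fderiv ℝ a (r • x)‖ * ‖x‖ := ContinuousLinearMap.le_opNorm _ _
    _ ≤ (|C| * ((1 + |R|) * (1 + ‖x‖)) ^ k) * (1 + ‖x‖) := by
      gcongr
      · rw [← norm_iteratedFDeriv_zero (𝕜 := ℝ) (f := fderiv ℝ a)]
        exact (hC _).trans (by gcongr; exact le_abs_self C)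
      · linarith
    _ = |C| * (1 + |R|) ^ k * (1 + ‖x‖) ^ (k + 1) := by rw [mul_pow]; ring

variable [MeasurableSpace E] [BorelSpace E] [SecondCountableTopology E]
  {μ : Measure E} [μ.HasTemperateGrowth]

lemma integrable_one_add_norm_pow_mul (w : SchwartzMap E F) (k : ℕ) :
    Integrable (fun x => (1 + ‖x‖) ^ k * ‖w x‖) μ := by
  simp_rw [add_comm (1 : ℝ), add_pow, one_pow, mul_one, Finset.sum_mul]
  refine integrable_finsetSum _ fun i _ => ?_
  refine ((w.integrable_pow_mul μ i).const_mul (k.choose i : ℝ)).congr (ae_of_all _ fun x => ?_)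
  dsimp only
  ring

lemma integrable_bilin_hasTemperateGrowth (L : F →L[ℝ] G →L[ℝ] H) (w : SchwartzMap E F) {a : E → G}
    (ha : a.HasTemperateGrowth) : Integrable (fun x => L (w x) (a x)) μ :=
  (SchwartzMap.bilinLeftCLM L ha w).integrable

lemma hasDerivAt_integral_bilin_comp_const_smul (L : F →L[ℝ] G →L[ℝ] H) (w : SchwartzMap E F)
    {a : E → G} (ha : a.HasTemperateGrowth) (r : ℝ) :
    HasDerivAt (fun r : ℝ => ∫ x, L (w x) (a (r • x)) ∂μ)
      (∫ x, L (w x) (fderiv ℝ a (r • x) x) ∂μ) r := by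
  obtain ⟨k, C, hC⟩ := exists_norm_fderiv_const_smul_apply_self_le ha (|r| + 1)
  have haw (ρ : ℝ) : Integrable (fun x => L (w x) (a (ρ • x))) μ :=
    integrable_bilin_hasTemperateGrowth L w (hasTemperateGrowth_comp_const_smul ha ρ)
  have ha' : (fun x => fderiv ℝ a (r • x) x).HasTemperateGrowth :=
    (ContinuousLinearMap.id ℝ (E →L[ℝ] G)).bilinear_hasTemperateGrowth
      (hasTemperateGrowth_comp_const_smul (hasTemperateGrowth_fderiv ha) r) .id'
  refine (hasDerivAt_integral_of_dominated_loc_of_deriv_le (Metric.ball_mem_nhds r one_pos)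
    (.of_forall fun ρ => (haw ρ).aestronglyMeasurable) (haw r)
    (F' := fun ρ x => L (w x) (fderiv ℝ a (ρ • x) x))
    (integrable_bilin_hasTemperateGrowth L w ha').aestronglyMeasurable
    (bound := fun x => ‖L‖ * C * ((1 + ‖x‖) ^ k * ‖w x‖)) (ae_of_all _ fun x ρ hρ => ?_)
    ((integrable_one_add_norm_pow_mul w k).const_mul _) (ae_of_all _ fun x ρ _ => ?_)).2
  · have hρ' : |ρ| ≤ |r| + 1 := by
      have hdist : |ρ - r| < 1 := hρ
      linarith [abs_sub_abs_le_abs_sub ρ r]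
    calc ‖L (w x) (fderiv ℝ a (ρ • x) x)‖ ≤ ‖L‖ * ‖w x‖ * ‖fderiv ℝ a (ρ • x) x‖ :=
          L.le_opNorm₂ _ _
      _ ≤ ‖L‖ * ‖w x‖ * (C * (1 + ‖x‖) ^ k) := by gcongr; exact hC ρ x hρ'
      _ = ‖L‖ * C * ((1 + ‖x‖) ^ k * ‖w x‖) := by ring
  · have hsmul : HasDerivAt (fun ρ : ℝ => ρ • x) x ρ := by
      simpa using (hasDerivAt_id ρ).smul_const x
    have hdiff : DifferentiableAt ℝ a (ρ • x) := ha.1.differentiable (by simp) _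
    exact (L (w x)).hasFDerivAt.comp_hasDerivAt ρ (hdiff.hasFDerivAt.comp_hasDerivAt ρ hsmul)

lemma hasDerivAt_integral_bilin_comp_exp_neg_smul (L : F →L[ℝ] G →L[ℝ] H) (w : SchwartzMap E F)
    {a : E → G} (ha : a.HasTemperateGrowth) (s : ℝ) :
    HasDerivAt (fun s : ℝ => ∫ x, L (w x) (a (Real.exp (-s) • x)) ∂μ)
      (-∫ x, L (w x) (fderiv ℝ a (Real.exp (-s) • x) (Real.exp (-s) • x)) ∂μ) s := by
  have hexp : HasDerivAt (fun s => Real.exp (-s)) (-Real.exp (-s)) s := by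
    simpa using (hasDerivAt_neg s).exp
  refine ((hasDerivAt_integral_bilin_comp_const_smul L w ha _).scomp s hexp).congr_deriv ?_
  simp only [map_smul, integral_smul, neg_smul]

lemma hasDerivAt_exp_smul_integral_bilin_comp_exp_neg_smul (L : F →L[ℝ] G →L[ℝ] H)
    (w : SchwartzMap E F) {a : E → G} (ha : a.HasTemperateGrowth) (c s : ℝ) :
    HasDerivAt (fun s => Real.exp (c * s) • ∫ x, L (w x) (a (Real.exp (-s) • x)) ∂μ)
      (Real.exp (c * s) • ∫ x, L (w x)
        (c • a (Real.exp (-s) • x) - fderiv ℝ a (Real.exp (-s) • x) (Real.exp (-s) • x)) ∂μ) s := by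
  have hexp : HasDerivAt (fun s => Real.exp (c * s)) (Real.exp (c * s) * c) s := by
    simpa using ((hasDerivAt_id s).const_mul c).exp
  have h0 := integrable_bilin_hasTemperateGrowth (μ := μ) L w
    (hasTemperateGrowth_comp_const_smul ha (Real.exp (-s)))
  have h1 := integrable_bilin_hasTemperateGrowth (μ := μ) L w
    (hasTemperateGrowth_comp_const_smul (hasTemperateGrowth_fderiv_apply_self ha) (Real.exp (-s)))
  refine (hexp.smul (hasDerivAt_integral_bilin_comp_exp_neg_smul L w ha s)).congr_deriv ?_
  simp only [map_sub, map_smul _ c]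
  rw [integral_sub (h0.fun_smul c) h1, integral_smul]
  module

end DilatedIntegrals

section Pairing

variable {d : ℕ}

/-- The real bilinear form `(z, w) ↦ conj z * w` on `ℂ`, through which `pairL2` is seen as the
integral of a continuous bilinear map. -/
def conjMul : ℂ →L[ℝ] ℂ →L[ℝ] ℂ :=
  (ContinuousLinearMap.mul ℝ ℂ).comp (conjCLE : ℂ →L[ℝ] ℂ)

lemma pairL2_eq_integral_conjMul (u v : Ed d → ℂ) : pairL2 d u v = ∫ x, conjMul (u x) (v x) := rfl

lemma pairL2_eq_inner (φ ψ : SchwartzMap (Ed d) ℂ) :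
    pairL2 d φ ψ
      = inner ℂ (SchwartzMap.toLpCLM ℂ ℂ 2 volume φ) (SchwartzMap.toLpCLM ℂ ℂ 2 volume ψ) := by
  simp only [SchwartzMap.toLpCLM_apply, SchwartzMap.inner_toL2_toL2_eq, pairL2, RCLike.inner_apply']

lemma conj_pairL2 (u v : Ed d → ℂ) : conj (pairL2 d u v) = pairL2 d v u := by
  rw [pairL2, pairL2, ← integral_conj]
  simp only [map_mul, conj_conj, mul_comm]

open scoped LineDeriv in
lemma pairL2_lineDeriv_left (φ ψ : SchwartzMap (Ed d) ℂ) (v : Ed d) :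
    pairL2 d (∂_{v} φ : SchwartzMap (Ed d) ℂ) ψ
      = -pairL2 d φ (∂_{v} ψ : SchwartzMap (Ed d) ℂ) := by
  rw [pairL2_eq_integral_conjMul, pairL2_eq_integral_conjMul]
  exact neg_eq_iff_eq_neg.mp
    (SchwartzMap.integral_bilinear_lineDerivOp_right_eq_neg_left φ ψ conjMul v).symm

end Pairing

section Dilation

variable {d : ℕ}

lemma dil_zero (u : Ed d → ℂ) : dil d 0 u = u := by
  ext x
  simp [dil]

lemma dil_dil (s t : ℝ) (u : Ed d → ℂ) : dil d s (dil d t u) = dil d (s + t) u := by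
  ext x
  simp only [dil]
  rw [smul_smul, ← Real.exp_add, ← mul_assoc, ← ofReal_mul, ← Real.exp_add, add_comm t s]
  ring_nf

lemma pairL2_dil_left (t : ℝ) (u v : Ed d → ℂ) :
    pairL2 d (dil d t u) v = pairL2 d u (dil d (-t) v) := by
  have hcov := Measure.integral_comp_smul (volume : Measure (Ed d))
    (fun x => conj (u x) * dil d (-t) v x) (Real.exp t)
  have hjac : |(Real.exp t ^ Module.finrank ℝ (Ed d))⁻¹| = Real.exp (-(t * d)) := by
    rw [abs_of_pos (by positivity), finrank_euclideanSpace_fin, ← Real.exp_nat_mul, ← Real.exp_neg,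
      mul_comm t]
  have hpt (x : Ed d) : conj (dil d t u x) * v x
      = Real.exp (t * d) • (conj (u (Real.exp t • x)) * dil d (-t) v (Real.exp t • x)) := by
    have hsplit : (Real.exp (t * d / 2) : ℂ) = Real.exp (t * d) * Real.exp (-t * d / 2) := by
      rw [← ofReal_mul, ← Real.exp_add]
      ring_nf
    simp only [dil, smul_smul, ← Real.exp_add, neg_add_cancel, Real.exp_zero, one_smul, map_mul,
      conj_ofReal, real_smul]
    rw [hsplit]
    ring
  simp only [pairL2]
  simp_rw [hpt]
  rw [integral_smul, hcov, hjac, smul_smul, ← Real.exp_add, add_neg_cancel, Real.exp_zero, one_smul]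

lemma pd_dil (j : Fin d) (t : ℝ) (u : Ed d → ℂ) :
    pd d j (dil d t u) = (Real.exp t : ℂ) • dil d t (pd d j u) := by
  ext x
  have hdil (v : Ed d → ℂ) :
      dil d t v = (Real.exp (t * d / 2) : ℂ) • fun y => v (Real.exp t • y) := rfl
  simp only [pd, hdil, fderiv_const_smul_field, fderiv_comp_smul, Pi.smul_apply, smul_apply,
    smul_eq_mul, real_smul]
  ring

/-- The dilation `dil d t φ` of a Schwartz function, as a Schwartz function. -/
def schwartzDil (t : ℝ) (φ : SchwartzMap (Ed d) ℂ) : SchwartzMap (Ed d) ℂ :=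
  (Real.exp (t * d / 2) : ℂ) • SchwartzMap.compCLMOfContinuousLinearEquiv ℂ
    (ContinuousLinearEquiv.smulLeft (Units.mk0 (Real.exp t) (Real.exp_ne_zero t))) φ

lemma coe_schwartzDil (t : ℝ) (φ : SchwartzMap (Ed d) ℂ) : ⇑(schwartzDil t φ) = dil d t φ := rfl

lemma norm_toLp_schwartzDil (t : ℝ) (φ : SchwartzMap (Ed d) ℂ) :
    ‖SchwartzMap.toLpCLM ℂ ℂ 2 volume (schwartzDil t φ)‖
      = ‖SchwartzMap.toLpCLM ℂ ℂ 2 volume φ‖ := by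
  rw [norm_eq_sqrt_re_inner (𝕜 := ℂ), norm_eq_sqrt_re_inner (𝕜 := ℂ), ← pairL2_eq_inner,
    ← pairL2_eq_inner, coe_schwartzDil, pairL2_dil_left, dil_dil, neg_add_cancel, dil_zero]

lemma norm_pairL2_dil_left_le (t : ℝ) (φ ψ : SchwartzMap (Ed d) ℂ) :
    ‖pairL2 d (dil d t φ) ψ‖
      ≤ ‖SchwartzMap.toLpCLM ℂ ℂ 2 volume φ‖ * ‖SchwartzMap.toLpCLM ℂ ℂ 2 volume ψ‖ := by
  rw [← coe_schwartzDil, pairL2_eq_inner, ← norm_toLp_schwartzDil t φ]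
  exact norm_inner_le_norm _ _

lemma differentiable_pairL2_dil_left (φ ψ : SchwartzMap (Ed d) ℂ) :
    Differentiable ℝ fun t => pairL2 d (dil d t φ) ψ := by
  have hformula (t : ℝ) : pairL2 d (dil d t φ) ψ
      = Real.exp (-(d / 2) * t) • ∫ x, conjMul (φ x) (ψ (Real.exp (-t) • x)) := by
    rw [pairL2_dil_left, pairL2_eq_integral_conjMul, ← integral_smul]
    refine integral_congr_ae (ae_of_all _ fun x => ?_)
    simp only [dil, ← real_smul, map_smul]
    ring_nf
  simp_rw [hformula]
  exact fun t => (hasDerivAt_exp_smul_integral_bilin_comp_exp_neg_smul conjMul φ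
    ψ.hasTemperateGrowth _ t).differentiableAt

end Dilation

section Sine

variable {d : ℕ}

lemma sinA_eq_coe (τ : ℝ) (φ : SchwartzMap (Ed d) ℂ) :
    sinA d τ φ = ⇑((2 * I)⁻¹ • (schwartzDil τ φ - schwartzDil (-τ) φ)) := by
  ext x
  simp only [sinA, smul_apply, sub_apply, coe_schwartzDil, smul_eq_mul,
    div_eq_inv_mul]

lemma pairL2_sinA_left (τ : ℝ) (φ ψ : SchwartzMap (Ed d) ℂ) :
    pairL2 d (sinA d τ φ) ψ = I / 2 * (pairL2 d (dil d τ φ) ψ - pairL2 d (dil d (-τ) φ) ψ) := by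
  have hconj : conj (2 * I)⁻¹ = I / 2 := by
    simp [div_eq_inv_mul, mul_comm, map_ofNat]
  rw [sinA_eq_coe, pairL2_eq_inner, map_smul, map_sub, inner_smul_left, inner_sub_left,
    ← pairL2_eq_inner, ← pairL2_eq_inner, coe_schwartzDil, coe_schwartzDil, hconj]

lemma pairL2_sinA_right (τ : ℝ) (φ ψ : SchwartzMap (Ed d) ℂ) :
    pairL2 d φ (sinA d τ ψ) = pairL2 d (sinA d τ φ) ψ := by
  rw [← conj_pairL2, pairL2_sinA_left, map_mul, map_sub, conj_pairL2, conj_pairL2,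
    pairL2_sinA_left, pairL2_dil_left τ φ, pairL2_dil_left (-τ) φ, neg_neg, map_div₀, conj_I,
    map_ofNat]
  ring

lemma differentiable_pairL2_dil_mul_left (h : ℝ) (φ ψ : SchwartzMap (Ed d) ℂ) :
    Differentiable ℝ fun t : ℝ => pairL2 d (dil d (t * h) φ) ψ :=
  (differentiable_pairL2_dil_left φ ψ).comp (differentiable_id.mul_const h)

lemma integrable_exp_neg_abs_smul_slope_pairL2_dil (h : ℝ) (φ ψ : SchwartzMap (Ed d) ℂ) :
    Integrable fun t : ℝ =>
      Real.exp (-|t|) • slope (fun t => pairL2 d (dil d (t * h) φ) ψ) 0 t :=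
  have hdiff := differentiable_pairL2_dil_mul_left h φ ψ
  integrable_exp_neg_abs_smul_slope hdiff.continuous (hdiff 0)
    fun t => norm_pairL2_dil_left_le (t * h) φ ψ

lemma integral_Ioi_exp_neg_div_mul_pairL2_sinA (h : ℝ) (φ ψ : SchwartzMap (Ed d) ℂ) :
    ∫ t in Set.Ioi (0 : ℝ), ((Real.exp (-t) / t : ℝ) : ℂ) * pairL2 d (sinA d (t * h) φ) ψ
      = I / 2 * ∫ t : ℝ, Real.exp (-|t|) • slope (fun t => pairL2 d (dil d (t * h) φ) ψ) 0 t := by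
  have hdiff := differentiable_pairL2_dil_mul_left h φ ψ
  rw [← integral_Ioi_exp_neg_div_smul_sub_comp_neg hdiff.continuous (hdiff 0)
    fun t => norm_pairL2_dil_left_le (t * h) φ ψ, ← integral_const_mul]
  refine integral_congr_ae (ae_of_all _ fun t => ?_)
  simp only [pairL2_sinA_left, neg_mul, real_smul]
  ring

end Sine

section DirichletForm

open scoped LineDeriv

variable {d : ℕ} {b : Ed d → Fin d → Fin d → ℝ}

lemma hasTemperateGrowth_ofReal_comp {E : Type*} [NormedAddCommGroup E] [NormedSpace ℝ E]
    {a : E → ℝ} (ha : a.HasTemperateGrowth) : (fun x => (a x : ℂ)).HasTemperateGrowth :=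
  Function.Complex.hasTemperateGrowth_ofReal.comp ha

lemma pd_coe (j : Fin d) (φ : SchwartzMap (Ed d) ℂ) :
    pd d j φ = ⇑(∂_{EuclideanSpace.single j (1 : ℝ)} φ : SchwartzMap (Ed d) ℂ) := rfl

/-- The function `divGrad d b φ` as a Schwartz function, for a Schwartz function `φ` and
coefficients `b` of temperate growth; for other `b` the value is junk (`smulLeftCLM` is then
`0`). -/
def schwartzDivGrad (b : Ed d → Fin d → Fin d → ℝ) (φ : SchwartzMap (Ed d) ℂ) :
    SchwartzMap (Ed d) ℂ :=
  -∑ j, ∑ k, ∂_{EuclideanSpace.single j (1 : ℝ)} (SchwartzMap.smulLeftCLM ℂ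
    (fun x => (b x j k : ℂ)) (∂_{EuclideanSpace.single k (1 : ℝ)} φ))

lemma coe_smulLeftCLM_lineDeriv (hb : ∀ j k, (fun x => b x j k).HasTemperateGrowth)
    (j k : Fin d) (φ : SchwartzMap (Ed d) ℂ) :
    ⇑(SchwartzMap.smulLeftCLM ℂ (fun x => (b x j k : ℂ)) (∂_{EuclideanSpace.single k (1 : ℝ)} φ))
      = fun x => (b x j k : ℂ) * pd d k φ x := by
  ext x
  exact SchwartzMap.smulLeftCLM_apply_apply (hasTemperateGrowth_ofReal_comp (hb j k)) _ x

lemma coe_schwartzDivGrad (hb : ∀ j k, (fun x => b x j k).HasTemperateGrowth)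
    (φ : SchwartzMap (Ed d) ℂ) : ⇑(schwartzDivGrad b φ) = divGrad d b φ := by
  ext x
  simp only [schwartzDivGrad, divGrad, divGradC, neg_apply, sum_apply,
    SchwartzMap.lineDerivOp_apply_eq_fderiv, coe_smulLeftCLM_lineDeriv hb, pd]

/-- The Dirichlet form `∑ⱼₖ ∫ bⱼₖ conj(∂ₖ u) ∂ⱼ v` of `-div (b ∇)`; it is the weak formulation
of `(divGrad d b u, v)`, and involves no derivatives of `b`. -/
def dirichletForm (b : Ed d → Fin d → Fin d → ℝ) (u v : Ed d → ℂ) : ℂ :=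
  ∑ j, ∑ k, pairL2 d (pd d k u) fun x => (b x j k : ℂ) * pd d j v x

lemma pairL2_ofReal_mul_left (a : Ed d → ℝ) (u v : Ed d → ℂ) :
    pairL2 d (fun x => (a x : ℂ) * u x) v = pairL2 d u fun x => (a x : ℂ) * v x := by
  simp only [pairL2, map_mul, conj_ofReal, mul_left_comm, mul_assoc]

lemma pairL2_divGrad_left (hb : ∀ j k, (fun x => b x j k).HasTemperateGrowth)
    (φ ψ : SchwartzMap (Ed d) ℂ) : pairL2 d (divGrad d b φ) ψ = dirichletForm b φ ψ := by
  rw [← coe_schwartzDivGrad hb, pairL2_eq_inner]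
  simp only [schwartzDivGrad, map_neg, map_sum, inner_neg_left, sum_inner, ← pairL2_eq_inner,
    pairL2_lineDeriv_left, coe_smulLeftCLM_lineDeriv hb, pairL2_ofReal_mul_left,
    Finset.sum_neg_distrib, neg_neg]
  rfl

lemma conj_dirichletForm (hsymm : SymmetricCoef d b) (u v : Ed d → ℂ) :
    conj (dirichletForm b u v) = dirichletForm b v u := by
  simp only [dirichletForm, map_sum, conj_pairL2, pairL2_ofReal_mul_left]
  rw [Finset.sum_comm]
  simp only [hsymm _ _ _]

lemma pairL2_divGrad_right (hb : ∀ j k, (fun x => b x j k).HasTemperateGrowth)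
    (hsymm : SymmetricCoef d b) (φ ψ : SchwartzMap (Ed d) ℂ) :
    pairL2 d φ (divGrad d b ψ) = dirichletForm b φ ψ := by
  rw [← conj_pairL2, pairL2_divGrad_left hb, conj_dirichletForm hsymm]

lemma dirichletForm_dil (b : Ed d → Fin d → Fin d → ℝ) (s : ℝ) (u v : Ed d → ℂ) :
    dirichletForm b (dil d s u) (dil d s v)
      = dirichletForm (fun x j k => Real.exp (2 * s) * b (Real.exp (-s) • x) j k) u v := by
  refine Finset.sum_congr rfl fun j _ => Finset.sum_congr rfl fun k _ => ?_
  have hcancel : dil d (-s) (fun x => (b x j k : ℂ) * dil d s (pd d j v) x)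
      = fun x => (b (Real.exp (-s) • x) j k : ℂ) * pd d j v x := by
    calc _ = fun x => (b (Real.exp (-s) • x) j k : ℂ) * dil d (-s) (dil d s (pd d j v)) x := by
          ext x
          simp only [dil]
          ring
      _ = _ := by rw [dil_dil, neg_add_cancel, dil_zero]
  calc pairL2 d (pd d k (dil d s u)) (fun x => (b x j k : ℂ) * pd d j (dil d s v) x)
      = Real.exp (2 * s) * pairL2 d (dil d s (pd d k u))
          (fun x => (b x j k : ℂ) * dil d s (pd d j v) x) := by
        rw [two_mul, Real.exp_add, ofReal_mul, pairL2, pairL2, ← integral_const_mul]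
        simp only [pd_dil, Pi.smul_apply, smul_eq_mul, map_mul, conj_ofReal]
        ring_nf
    _ = _ := by
        rw [pairL2_dil_left, hcancel, pairL2, pairL2, ← integral_const_mul]
        push_cast
        ring_nf

end DirichletForm

section Commutator

variable {d : ℕ} {b : Ed d → Fin d → Fin d → ℝ}

lemma pairL2_const_mul_mul_right (c : ℝ) (a : Ed d → ℝ) (φ ψ : SchwartzMap (Ed d) ℂ) :
    pairL2 d φ (fun x => ((c * a x : ℝ) : ℂ) * ψ x)
      = c • ∫ x,
        (ContinuousLinearMap.lsmul ℝ ℝ).flip (SchwartzMap.pairing conjMul φ ψ x) (a x) := by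
  rw [pairL2_eq_integral_conjMul, ← integral_smul]
  refine integral_congr_ae (ae_of_all _ fun x => ?_)
  simp only [← real_smul, map_smul, mul_smul, ContinuousLinearMap.flip_apply,
    ContinuousLinearMap.lsmul_apply, SchwartzMap.pairing_apply_apply]

lemma hasTemperateGrowth_commCoef (hb : ∀ j k, (fun x => b x j k).HasTemperateGrowth)
    (j k : Fin d) : (fun x => commCoef d b x j k).HasTemperateGrowth :=
  ((Function.HasTemperateGrowth.const (2 : ℝ)).mul (hb j k)).sub
    (hasTemperateGrowth_fderiv_apply_self (hb j k))

lemma hasDerivAt_dirichletForm_dil (hb : ∀ j k, (fun x => b x j k).HasTemperateGrowth)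
    (φ ψ : SchwartzMap (Ed d) ℂ) (s : ℝ) :
    HasDerivAt (fun s => dirichletForm b (dil d s φ) (dil d s ψ))
      (dirichletForm (commCoef d b) (dil d s φ) (dil d s ψ)) s := by
  simp only [dirichletForm_dil]
  refine HasDerivAt.fun_sum fun j _ => HasDerivAt.fun_sum fun k _ => ?_
  simp only [pd_coe, pairL2_const_mul_mul_right]
  exact hasDerivAt_exp_smul_integral_bilin_comp_exp_neg_smul _ _ (hb j k) 2 s

lemma pairL2_ptauFun_left (hb : ∀ j k, (fun x => b x j k).HasTemperateGrowth)
    (φ ψ : SchwartzMap (Ed d) ℂ) (s : ℝ) :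
    pairL2 d (ptauFun d b s φ) ψ = dirichletForm (commCoef d b) (dil d s φ) (dil d s ψ) := by
  rw [ptauFun, pairL2_dil_left, neg_neg, ← coe_schwartzDil, ← coe_schwartzDil,
    pairL2_divGrad_left (hasTemperateGrowth_commCoef hb)]

lemma integral_pairL2_ptauFun (hb : ∀ j k, (fun x => b x j k).HasTemperateGrowth)
    (φ ψ : SchwartzMap (Ed d) ℂ) (τ : ℝ) :
    ∫ s in (0 : ℝ)..τ, pairL2 d (ptauFun d b s φ) ψ
      = dirichletForm b (dil d τ φ) (dil d τ ψ) - dirichletForm b φ ψ := by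
  have hcont : Continuous fun s => dirichletForm (commCoef d b) (dil d s φ) (dil d s ψ) :=
    continuous_iff_continuousAt.mpr fun s =>
      (hasDerivAt_dirichletForm_dil (hasTemperateGrowth_commCoef hb) φ ψ s).continuousAt
  simp only [pairL2_ptauFun_left hb]
  rw [intervalIntegral.integral_eq_sub_of_hasDerivAt
    (fun s _ => hasDerivAt_dirichletForm_dil hb φ ψ s) (hcont.intervalIntegrable 0 τ),
    dil_zero, dil_zero]

lemma integral_pairL2_dil_ptauFun (hb : ∀ j k, (fun x => b x j k).HasTemperateGrowth)
    (hsymm : SymmetricCoef d b) (φ ψ : SchwartzMap (Ed d) ℂ) (τ : ℝ) :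
    ∫ s in (0 : ℝ)..τ, pairL2 d (dil d τ (ptauFun d b s φ)) ψ
      = pairL2 d (dil d τ φ) (divGrad d b ψ) - pairL2 d (dil d τ (divGrad d b φ)) ψ := by
  simp only [pairL2_dil_left τ (ptauFun d b _ φ), ← coe_schwartzDil (-τ)]
  rw [integral_pairL2_ptauFun hb, ← coe_schwartzDil τ φ, pairL2_divGrad_right hb hsymm,
    pairL2_dil_left τ (divGrad d b φ), ← coe_schwartzDil (-τ), pairL2_divGrad_left hb,
    coe_schwartzDil (-τ), dil_dil, add_neg_cancel, dil_zero]

lemma smul_integral_pairL2_dil_ptauFun_mul (hb : ∀ j k, (fun x => b x j k).HasTemperateGrowth)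
    (hsymm : SymmetricCoef d b) (φ ψ : SchwartzMap (Ed d) ℂ) (h t : ℝ) :
    h • ∫ s in (0 : ℝ)..t, pairL2 d (dil d (t * h) (ptauFun d b (s * h) φ)) ψ
      = pairL2 d (dil d (t * h) φ) (divGrad d b ψ)
        - pairL2 d (dil d (t * h) (divGrad d b φ)) ψ := by
  rw [intervalIntegral.smul_integral_comp_mul_right
    (fun s => pairL2 d (dil d (t * h) (ptauFun d b s φ)) ψ), zero_mul,
    integral_pairL2_dil_ptauFun hb hsymm]

lemma slope_pairL2_dil_mul_sub_slope (hb : ∀ j k, (fun x => b x j k).HasTemperateGrowth)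
    (hsymm : SymmetricCoef d b) (φ ψ : SchwartzMap (Ed d) ℂ) (h t : ℝ) :
    slope (fun t => pairL2 d (dil d (t * h) φ) (divGrad d b ψ)) 0 t
        - slope (fun t => pairL2 d (dil d (t * h) (divGrad d b φ)) ψ) 0 t
      = h • t⁻¹ • ∫ s in (0 : ℝ)..t, pairL2 d (dil d (t * h) (ptauFun d b (s * h) φ)) ψ := by
  have hzero : pairL2 d φ (divGrad d b ψ) = pairL2 d (divGrad d b φ) ψ := by
    rw [pairL2_divGrad_right hb hsymm, pairL2_divGrad_left hb]
  simp only [slope, vsub_eq_sub, sub_zero, zero_mul, dil_zero, hzero]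
  rw [smul_comm, smul_integral_pairL2_dil_ptauFun_mul hb hsymm, ← smul_sub,
    sub_sub_sub_cancel_right]

lemma CbSmooth.hasTemperateGrowth {a : Ed d → ℝ} (ha : CbSmooth d a) : a.HasTemperateGrowth :=
  ⟨ha.1, fun n => ⟨0, (ha.2 n).imp fun C hC x => by simpa using hC x⟩⟩

end Commutator

theorem statement7_general (d : ℕ) (G : Ed d → Fin d → Fin d → ℝ)
    (hG : ∀ j k, (fun x => G x j k).HasTemperateGrowth) (hsymm : SymmetricCoef d G)
    (u₁ u₂ : SchwartzMap (Ed d) ℂ) (h : ℝ) :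
    (-Complex.I) * (∫ t in Set.Ioi (0:ℝ),
        ((Real.exp (-t) / t : ℝ) : ℂ) * pairL2 d (sinA d (t * h) ⇑u₁) (divGrad d G ⇑u₂))
      + Complex.I * (∫ t in Set.Ioi (0:ℝ),
        ((Real.exp (-t) / t : ℝ) : ℂ) * pairL2 d (divGrad d G ⇑u₁) (sinA d (t * h) ⇑u₂))
    = ((h / 2 : ℝ) : ℂ) * ∫ t : ℝ, ((Real.exp (-|t|) : ℝ) : ℂ) *
        ((t : ℂ)⁻¹ * ∫ s in (0:ℝ)..t, pairL2 d (dil d (t * h) (ptauFun d G (s * h) ⇑u₁)) ⇑u₂) := by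
  have hint₁ := integrable_exp_neg_abs_smul_slope_pairL2_dil h u₁ (schwartzDivGrad G u₂)
  have hint₂ := integrable_exp_neg_abs_smul_slope_pairL2_dil h (schwartzDivGrad G u₁) u₂
  have hI (z w : ℂ) : -I * (I / 2 * z) + I * (I / 2 * w) = 1 / 2 * (z - w) := by
    linear_combination (w - z) / 2 * I_mul_I
  simp only [← coe_schwartzDivGrad hG, pairL2_sinA_right]
  rw [integral_Ioi_exp_neg_div_mul_pairL2_sinA, integral_Ioi_exp_neg_div_mul_pairL2_sinA, hI,
    ← integral_sub hint₁ hint₂, ← integral_const_mul, ← integral_const_mul]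
  refine integral_congr_ae (ae_of_all _ fun t => ?_)
  simp only [coe_schwartzDivGrad hG]
  rw [← smul_sub, slope_pairL2_dil_mul_sub_slope hG hsymm]
  simp only [real_smul]
  push_cast
  ring

/-- **Proposition (representation formula for the commutator `i[P, F(hA)]`).**
For `u₁, u₂ ∈ 𝒮(ℝ^d)` and `0 < h < 1`,
`(i[P,F(hA)]u₁,u₂) = (h/2) ∫_ℝ e^{-|t|} ( (1/t) ∫₀^t (e^{ithA} P_{sh} u₁, u₂) ds ) dt`,
where `F = arctan`, `P_τ = e^{-iτA} i[P,A] e^{iτA}` and the left hand side is the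
commutator form `(iF(hA)u₁, Pu₂) - (iPu₁, F(hA)u₂)`, with
`F(hA) = ∫₀^∞ sin(thA) e^{-t} dt/t` (spectral theorem); inner products are conjugate
linear in the first variable. -/
theorem statement7 (d : ℕ) (G : Ed d → Fin d → Fin d → ℝ) (hG : Standing d G)
    (u₁ u₂ : SchwartzMap (Ed d) ℂ) (h : ℝ) (h0 : 0 < h) (h1 : h < 1) :
    (-Complex.I) * (∫ t in Set.Ioi (0:ℝ),
        ((Real.exp (-t) / t : ℝ) : ℂ) * pairL2 d (sinA d (t * h) ⇑u₁) (divGrad d G ⇑u₂))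
      + Complex.I * (∫ t in Set.Ioi (0:ℝ),
        ((Real.exp (-t) / t : ℝ) : ℂ) * pairL2 d (divGrad d G ⇑u₁) (sinA d (t * h) ⇑u₂))
    = ((h / 2 : ℝ) : ℂ) * ∫ t : ℝ, ((Real.exp (-|t|) : ℝ) : ℂ) *
        ((t : ℂ)⁻¹ * ∫ s in (0:ℝ)..t, pairL2 d (dil d (t * h) (ptauFun d G (s * h) ⇑u₁)) ⇑u₂) := by
  exact statement7_general d G (fun j k => (hG.1 j k).hasTemperateGrowth) hG.2.1 u₁ u₂ h

end
end

section
/- Let F_ν(λ) = ∫₀^∞ sin(tλ) · t/(t² + ν²) · e^{-t} dt for ν > 0. There exists C > 0 such that |F_ν(λ)| ≤ C|λ| for all ν > 0 and λ ∈ ℝ. Moreover, for every λ ∈ ℝ, F_ν(λ) → arctan(λ) as ν → 0. -/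
open MeasureTheory Filter Topology Complex
open scoped Real ENNReal FourierTransform ComplexConjugate

noncomputable section

/-!
The kernel `sin (tλ) · t / (t² + ν²)` is bounded by `|λ|` uniformly in `t` and `ν`, because
`|sin (tλ)| ≤ |t| |λ|`. Integrating against `e^{-t}` gives the linear bound on `F_ν`, and by
dominated convergence `F_ν (λ)` is continuous in `ν` up to `ν = 0`. At `ν = 0` the kernel is
`sin (tλ) / t`, and differentiating in `λ` turns the integral into the Laplace transform of the
cosine, which is the derivative of the arctangent.
-/

/-- The kernel `sin (tλ) · t / (t² + ν²)` of `F_ν`. It regularises `sin (tλ) / t`, which it equals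
for `ν = 0`; at `t = 0` its value is `0` for every `ν`. -/
def sinKernel (ν lam t : ℝ) : ℝ :=
  Real.sin (t * lam) * (t / (t ^ 2 + ν ^ 2))

section Kernel

variable (ν lam t : ℝ)

lemma sinKernel_zero_left : sinKernel 0 lam t = Real.sin (t * lam) / t := by
  rw [sinKernel, zero_pow two_ne_zero, add_zero, sq, div_self_mul_self', div_eq_mul_inv]

lemma measurable_sinKernel : Measurable (sinKernel ν lam) := by
  unfold sinKernel
  fun_prop

lemma sq_div_sq_add_sq_le_one : t ^ 2 / (t ^ 2 + ν ^ 2) ≤ 1 :=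
  div_le_one_of_le₀ (le_add_of_nonneg_right (sq_nonneg ν)) (by positivity)

lemma abs_sinKernel_le : |sinKernel ν lam t| ≤ |lam| :=
  calc |sinKernel ν lam t| = |Real.sin (t * lam)| * (|t| / (t ^ 2 + ν ^ 2)) := by
        rw [sinKernel, abs_mul, abs_div, abs_of_nonneg (by positivity : 0 ≤ t ^ 2 + ν ^ 2)]
    _ ≤ |t * lam| * (|t| / (t ^ 2 + ν ^ 2)) :=
        mul_le_mul_of_nonneg_right Real.abs_sin_le_abs (by positivity)
    _ = |lam| * (t ^ 2 / (t ^ 2 + ν ^ 2)) := by rw [abs_mul, ← sq_abs t]; ring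
    _ ≤ |lam| := mul_le_of_le_one_right (abs_nonneg lam) (sq_div_sq_add_sq_le_one ν t)

lemma continuous_sinKernel_left : Continuous fun ν ↦ sinKernel ν lam t := by
  rcases eq_or_ne t 0 with rfl | ht
  · simpa [sinKernel] using continuous_const
  · have hdenom : ∀ ν : ℝ, t ^ 2 + ν ^ 2 ≠ 0 := fun ν ↦ by positivity
    unfold sinKernel
    fun_prop (disch := exact hdenom _)

lemma hasDerivAt_sinKernel :
    HasDerivAt (fun lam ↦ sinKernel ν lam t)
      (Real.cos (t * lam) * (t ^ 2 / (t ^ 2 + ν ^ 2))) lam := by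
  have hsin := ((hasDerivAt_id' lam).const_mul t).sin.mul_const (t / (t ^ 2 + ν ^ 2))
  exact hsin.congr_deriv (by ring)

end Kernel

section WeightedIntegral

variable {E : Type*} [NormedAddCommGroup E] [NormedSpace ℝ E] {μ : Measure ℝ} {w : ℝ → E}

lemma norm_sinKernel_smul_le (ν lam t : ℝ) : ‖sinKernel ν lam t • w t‖ ≤ |lam| * ‖w t‖ := by
  rw [norm_smul]
  exact mul_le_mul_of_nonneg_right (abs_sinKernel_le ν lam t) (norm_nonneg _)

lemma integrable_sinKernel_smul (hw : Integrable w μ) (ν lam : ℝ) :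
    Integrable (fun t ↦ sinKernel ν lam t • w t) μ :=
  hw.bdd_smul |lam| (measurable_sinKernel ν lam).aestronglyMeasurable
    (ae_of_all _ (abs_sinKernel_le ν lam))

lemma norm_integral_sinKernel_smul_le (hw : Integrable w μ) (ν lam : ℝ) :
    ‖∫ t, sinKernel ν lam t • w t ∂μ‖ ≤ |lam| * ∫ t, ‖w t‖ ∂μ := by
  rw [← integral_const_mul]
  exact norm_integral_le_of_norm_le (hw.norm.const_mul |lam|)
    (ae_of_all _ (norm_sinKernel_smul_le ν lam))

lemma continuous_integral_sinKernel_smul (hw : Integrable w μ) (lam : ℝ) :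
    Continuous fun ν ↦ ∫ t, sinKernel ν lam t • w t ∂μ :=
  continuous_of_dominated (fun ν ↦ (integrable_sinKernel_smul hw ν lam).aestronglyMeasurable)
    (fun ν ↦ ae_of_all _ (norm_sinKernel_smul_le ν lam)) (hw.norm.const_mul |lam|)
    (ae_of_all _ fun t ↦ (continuous_sinKernel_left lam t).smul continuous_const)

lemma hasDerivAt_integral_sinKernel_smul (hw : Integrable w μ) (ν lam : ℝ) :
    HasDerivAt (fun lam ↦ ∫ t, sinKernel ν lam t • w t ∂μ)
      (∫ t, (Real.cos (t * lam) * (t ^ 2 / (t ^ 2 + ν ^ 2))) • w t ∂μ) lam := by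
  have hderiv_meas : Measurable fun t ↦ Real.cos (t * lam) * (t ^ 2 / (t ^ 2 + ν ^ 2)) := by
    fun_prop
  have hderiv_bound (x t : ℝ) : ‖Real.cos (t * x) * (t ^ 2 / (t ^ 2 + ν ^ 2))‖ ≤ 1 := by
    have hratio_nonneg : 0 ≤ t ^ 2 / (t ^ 2 + ν ^ 2) := by positivity
    rw [norm_mul, Real.norm_of_nonneg hratio_nonneg]
    exact mul_le_one₀ (Real.abs_cos_le_one _) hratio_nonneg (sq_div_sq_add_sq_le_one ν t)
  refine (hasDerivAt_integral_of_dominated_loc_of_deriv_le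
    (F' := fun x t ↦ (Real.cos (t * x) * (t ^ 2 / (t ^ 2 + ν ^ 2))) • w t)
    (bound := fun t ↦ ‖w t‖) univ_mem
    (.of_forall fun x ↦ (integrable_sinKernel_smul hw ν x).aestronglyMeasurable)
    (integrable_sinKernel_smul hw ν lam)
    (hderiv_meas.aestronglyMeasurable.smul hw.aestronglyMeasurable)
    (ae_of_all _ fun t x _ ↦ ?_) hw.norm
    (ae_of_all _ fun t x _ ↦ (hasDerivAt_sinKernel ν x t).smul_const (w t))).2
  rw [norm_smul]
  exact mul_le_of_le_one_left (norm_nonneg _) (hderiv_bound x t)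

end WeightedIntegral

section LaplaceTransform

variable {p : ℝ}

lemma integral_cos_mul_exp_neg_mul_Ioi (hp : 0 < p) (lam : ℝ) :
    ∫ t in Set.Ioi (0 : ℝ), Real.cos (t * lam) * Real.exp (-(p * t)) = p / (p ^ 2 + lam ^ 2) := by
  set a : ℂ := ⟨-p, lam⟩ with ha
  have ha_neg : a.re < 0 := neg_lt_zero.mpr hp
  calc ∫ t in Set.Ioi (0 : ℝ), Real.cos (t * lam) * Real.exp (-(p * t))
      = ∫ t in Set.Ioi (0 : ℝ), (Complex.exp (a * t)).re := by
        simp [ha, Complex.exp_re, mul_comm]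
    _ = (∫ t in Set.Ioi (0 : ℝ), Complex.exp (a * t)).re :=
        integral_re (integrableOn_exp_mul_complex_Ioi ha_neg 0)
    _ = (-a⁻¹).re := by
        rw [integral_exp_mul_complex_Ioi ha_neg]
        simp [neg_div]
    _ = p / (p ^ 2 + lam ^ 2) := by
        simp [ha, Complex.inv_re, Complex.normSq_mk, neg_div, ← sq]

lemma hasDerivAt_arctan_div (hp : 0 < p) (lam : ℝ) :
    HasDerivAt (fun lam ↦ Real.arctan (lam / p)) (p / (p ^ 2 + lam ^ 2)) lam := by
  refine ((hasDerivAt_id' lam).div_const p).arctan.congr_deriv ?_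
  field_simp

lemma integral_sin_div_mul_exp_neg_mul_Ioi (hp : 0 < p) (lam : ℝ) :
    ∫ t in Set.Ioi (0 : ℝ), Real.sin (t * lam) / t * Real.exp (-(p * t))
      = Real.arctan (lam / p) := by
  have hexp : IntegrableOn (fun t ↦ Real.exp (-(p * t))) (Set.Ioi 0) := by
    simpa only [neg_mul] using integrableOn_exp_mul_Ioi (neg_lt_zero.mpr hp) 0
  have hderiv (x : ℝ) : HasDerivAt
      (fun x ↦ ∫ t in Set.Ioi (0 : ℝ), Real.sin (t * x) / t * Real.exp (-(p * t)))
      (p / (p ^ 2 + x ^ 2)) x := by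
    have h := hasDerivAt_integral_sinKernel_smul hexp 0 x
    simp only [sinKernel_zero_left, smul_eq_mul] at h
    rw [← integral_cos_mul_exp_neg_mul_Ioi hp]
    refine h.congr_deriv (setIntegral_congr_fun measurableSet_Ioi fun t ht ↦ ?_)
    have ht_ne : t ≠ 0 := ne_of_gt ht
    simp [ht_ne]
  have hdiff (x : ℝ) := (hderiv x).sub (hasDerivAt_arctan_div hp x)
  have hconst := is_const_of_deriv_eq_zero (fun x ↦ (hdiff x).differentiableAt)
    (fun x ↦ (hdiff x).deriv.trans (sub_self _)) lam 0
  simpa [sub_eq_zero] using hconst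

end LaplaceTransform

lemma Fnu_eq_integral_sinKernel_smul (ν lam : ℝ) :
    Fnu ν lam = ∫ t in Set.Ioi (0 : ℝ), sinKernel ν lam t • Real.exp (-t) :=
  rfl

lemma abs_Fnu_le (ν lam : ℝ) : |Fnu ν lam| ≤ |lam| := by
  have h := norm_integral_sinKernel_smul_le (integrableOn_exp_neg_Ioi 0) ν lam
  simpa only [← Fnu_eq_integral_sinKernel_smul, Real.norm_eq_abs, Real.abs_exp,
    integral_exp_neg_Ioi_zero, mul_one] using h

lemma continuous_Fnu_left (lam : ℝ) : Continuous fun ν ↦ Fnu ν lam :=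
  continuous_integral_sinKernel_smul (integrableOn_exp_neg_Ioi 0) lam

lemma Fnu_zero_left (lam : ℝ) : Fnu 0 lam = Real.arctan lam := by
  simpa only [Fnu_eq_integral_sinKernel_smul, sinKernel_zero_left, smul_eq_mul, one_mul, div_one]
    using integral_sin_div_mul_exp_neg_mul_Ioi one_pos lam

/-- **Lemma (properties of `F_ν`).** With
`F_ν(λ) = ∫₀^∞ sin(tλ) t/(t²+ν²) e^{-t} dt`, there is `C > 0` such that
`|F_ν(λ)| ≤ C|λ|` for all `ν > 0` and `λ ∈ ℝ`, and `F_ν(λ) → arctan λ` as `ν → 0⁺`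
for every `λ`. -/
theorem statement8 :
    (∃ C : ℝ, 0 < C ∧ ∀ (ν lam : ℝ), 0 < ν → |Fnu ν lam| ≤ C * |lam|) ∧
    ∀ lam : ℝ, Tendsto (fun ν => Fnu ν lam) (𝓝[>] (0:ℝ)) (𝓝 (Real.arctan lam)) := by
  refine ⟨⟨1, one_pos, fun ν lam _ ↦ ?_⟩, fun lam ↦ ?_⟩
  · rw [one_mul]
    exact abs_Fnu_le ν lam
  · exact ((continuous_Fnu_left lam).tendsto' 0 _ (Fnu_zero_left lam)).mono_left
      nhdsWithin_le_nhds

end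
end
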